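/- arXiv:1503.04954 — 2 statements merged into one kernel-verified Lean document; each statement's English description precedes it below -/
import Mathlib

section
/- Let T > 0 and let a ∈ L¹([0,T]). Assume there exists a closed interval J ⊆ [0,T] such that a(x) ≥ 0 for a.e. x ∈ J and ∫₀ᵀ a(x) dx < 0 < ∫_J a(x) dx. Let g : [0,∞) → [0,∞) be continuously differentiable with g(0) = 0 and g(s) > 0 for s > 0, satisfying g'(0) = 0 and 0 < liminf_{s→+∞} g'(s) ≤ limsup_{s→+∞} g'(s) < +∞. Then there exists ν* > 0 such that for every ν > ν* the equation u'' + ν a(x) g(u) = 0 has at least one positive solution satisfying the Neumann boundary conditions and at least one positive solution satisfying the periodic boundary conditions. -/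
open MeasureTheory Set Filter

/-- `u` (with derivative `u'`) is a C¹ solution of `u'' + f(x) = 0` on `[0,T]`:
`u'` is absolutely continuous and the equation holds a.e., expressed via the
integral equation `u'(x) = u'(0) − ∫₀ˣ f(t) dt`. -/
def IsSolOn (T : ℝ) (f : ℝ → ℝ) (u u' : ℝ → ℝ) : Prop :=
  (∀ x ∈ Icc (0:ℝ) T, HasDerivWithinAt u (u' x) (Icc (0:ℝ) T) x) ∧
  ContinuousOn u' (Icc (0:ℝ) T) ∧
  ∀ x ∈ Icc (0:ℝ) T, u' x = u' 0 - ∫ t in (0:ℝ)..x, f t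

/-- The equation `u'' + a(x) g(u) = 0` on `[0,T]` has a positive solution
satisfying the Neumann boundary conditions. -/
def PosSolNeumann (T : ℝ) (a g : ℝ → ℝ) : Prop :=
  ∃ u u' : ℝ → ℝ, IsSolOn T (fun t => a t * g (u t)) u u' ∧
    (∀ x ∈ Icc (0:ℝ) T, 0 < u x) ∧ u' 0 = 0 ∧ u' T = 0

/-- The equation `u'' + a(x) g(u) = 0` on `[0,T]` has a positive solution
satisfying the periodic boundary conditions. -/
def PosSolPeriodic (T : ℝ) (a g : ℝ → ℝ) : Prop :=
  ∃ u u' : ℝ → ℝ, IsSolOn T (fun t => a t * g (u t)) u u' ∧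
    (∀ x ∈ Icc (0:ℝ) T, 0 < u x) ∧ u 0 = u T ∧ u' 0 = u' T

lemma rect_aux (F : ℝ × ℝ → ℂ) (hF : Continuous F) (h0 : ∀ x, F x ≠ 0) :
    ∃ θ : ℝ × ℝ → ℝ, Continuous θ ∧ ∀ x, F x = ‖F x‖ * Complex.exp (θ x * Complex.I) := by
  obtain ⟨h, ⟨-, hh⟩, -⟩ := Complex.isCoveringMapOn_exp.existsUnique_continuousMap_lifts
    (⟨F, hF⟩ : C(ℝ × ℝ, ℂ)) (a₀ := 0) (e₀ := Complex.log (F 0)) (by simp [Complex.exp_log (h0 0)])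
    (by simpa using h0)
  refine ⟨fun x => (h x).im, by fun_prop, fun x => ?_⟩
  have : F x = Complex.exp (h x) := (congrFun hh x).symm
  rw [this, Complex.norm_exp, Complex.ofReal_exp, ← Complex.exp_add, Complex.re_add_im]

/-- IVT: a continuous function on an interval avoiding a value stays below it. -/
lemma stay_lt {φ : ℝ → ℝ} (hφ : Continuous φ) {s t d : ℝ} 
    (hs : φ s < d) (hd : ∀ x ∈ uIcc s t, φ x ≠ d) : φ t < d := by
  by_contra hc
  push Not at hc
  obtain ⟨x, hx, hx'⟩ := intermediate_value_uIcc (a := s) (b := t) hφ.continuousOn 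
    (show d ∈ uIcc (φ s) (φ t) by rw [uIcc_of_le (by linarith)]; exact ⟨hs.le, hc⟩)
  exact hd x hx hx'

lemma stay_gt {φ : ℝ → ℝ} (hφ : Continuous φ) {s t d : ℝ} 
    (hs : d < φ s) (hd : ∀ x ∈ uIcc s t, φ x ≠ d) : d < φ t := by
  have := stay_lt (φ := fun x => - φ x) (d := -d) hφ.neg (by linarith) 
    (fun x hx h => hd x hx (by linarith))
  linarith

lemma rect_zero (c0 c1 p0 q p1 : ℝ) (hc : c0 ≤ c1) (hp : p0 ≤ q) (hq : q ≤ p1)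
    (F1 F2 : ℝ → ℝ → ℝ)
    (hF1 : Continuous (fun x : ℝ × ℝ => F1 x.1 x.2)) 
    (hF2 : Continuous (fun x : ℝ × ℝ => F2 x.1 x.2))
    (hbot : ∀ c ∈ Icc c0 c1, F1 c p0 < 0) (htop : ∀ c ∈ Icc c0 c1, F1 c p1 < 0)
    (hright : ∀ p ∈ Icc p0 p1, F1 c1 p < 0)
    (hlow : ∀ p ∈ Icc p0 q, F1 c0 p = 0 → 0 < F2 c0 p)
    (hmid : 0 < F1 c0 q)
    (hup : ∀ p ∈ Icc q p1, F1 c0 p = 0 → F2 c0 p < 0) :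
    ∃ c ∈ Icc c0 c1, ∃ p ∈ Icc p0 p1, F1 c p = 0 ∧ F2 c p = 0 := by
  by_contra hcon
  push Not at hcon
  have hpp := hp.trans hq
  set π1 : ℝ → ℝ := fun c => max c0 (min c1 c) with hπ1
  set π2 : ℝ → ℝ := fun p => max p0 (min p1 p) with hπ2
  have e1 : ∀ c ∈ Icc c0 c1, π1 c = c := fun c h => by simp [hπ1, h.1, h.2]
  have e2 : ∀ c ∈ Icc p0 p1, π2 c = c := fun c h => by simp [hπ2, h.1, h.2]
  have m1 : ∀ c, π1 c ∈ Icc c0 c1 := fun c => ⟨le_max_left _ _, max_le hc (min_le_left _ _)⟩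
  have m2 : ∀ c, π2 c ∈ Icc p0 p1 := fun c => ⟨le_max_left _ _, max_le hpp (min_le_left _ _)⟩
  have cπ : Continuous (fun x : ℝ × ℝ => (π1 x.1, π2 x.2)) := by simp only [hπ1, hπ2]; fun_prop
  set F : ℝ × ℝ → ℂ := fun x => (F1 (π1 x.1) (π2 x.2) : ℂ) + (F2 (π1 x.1) (π2 x.2) : ℂ) * Complex.I with hF
  have Fre : ∀ x, (F x).re = F1 (π1 x.1) (π2 x.2) := fun x => by simp [hF]
  have Fim : ∀ x, (F x).im = F2 (π1 x.1) (π2 x.2) := fun x => by simp [hF]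
  have hFc : Continuous F := by
    have := hF1.comp cπ
    have := hF2.comp cπ
    simp only [Function.comp_def] at *
    fun_prop
  have hF0 : ∀ x, F x ≠ 0 := fun x h => by
    have h1 := congrArg Complex.re h
    have h2 := congrArg Complex.im h
    rw [Fre] at h1; rw [Fim] at h2
    exact hcon _ (m1 _) _ (m2 _) h1 h2
  obtain ⟨θ', hθ'c, hθ'⟩ := rect_aux F hFc hF0
  -- normalise
  obtain ⟨θ, hθc, hre, him, hlo, hhi⟩ : ∃ θ : ℝ × ℝ → ℝ, Continuous θ ∧ 
      (∀ x, (F x).re = ‖F x‖ * Real.cos (θ x)) ∧ (∀ x, (F x).im = ‖F x‖ * Real.sin (θ x)) ∧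
      -Real.pi < θ (c0, p0) - Real.pi ∧ θ (c0, p0) - Real.pi ≤ Real.pi := by
    obtain ⟨k, hk, -⟩ := existsUnique_sub_zsmul_mem_Ioc (Real.two_pi_pos) (θ' (c0,p0)) 0
    refine ⟨fun x => θ' x - k * (2 * Real.pi), by fun_prop, fun x => ?_, fun x => ?_, ?_, ?_⟩
    · conv_lhs => rw [hθ' x]
      rw [Real.cos_sub_int_mul_two_pi]
      simp [Complex.exp_ofReal_mul_I_re]
    · conv_lhs => rw [hθ' x]
      rw [Real.sin_sub_int_mul_two_pi]
      simp [Complex.exp_ofReal_mul_I_im]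
    · have := hk.1; simp at this; linarith
    · have := hk.2; simp at this; linarith
  have hn : ∀ x, 0 < ‖F x‖ := fun x => norm_pos_iff.mpr (hF0 x)
  have hre' : ∀ c ∈ Icc c0 c1, ∀ p ∈ Icc p0 p1, F1 c p = ‖F (c,p)‖ * Real.cos (θ (c,p)) := by
    intro c hc p hp
    rw [← hre, Fre]; simp [e1 c hc, e2 p hp]
  have him' : ∀ c ∈ Icc c0 c1, ∀ p ∈ Icc p0 p1, F2 c p = ‖F (c,p)‖ * Real.sin (θ (c,p)) := by
    intro c hc p hp
    rw [← him, Fim]; simp [e1 c hc, e2 p hp]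
  have mc0 : c0 ∈ Icc c0 c1 := ⟨le_rfl, hc⟩
  have mc1 : c1 ∈ Icc c0 c1 := ⟨hc, le_rfl⟩
  have mp0 : p0 ∈ Icc p0 p1 := ⟨le_rfl, hpp⟩
  have mp1 : p1 ∈ Icc p0 p1 := ⟨hpp, le_rfl⟩
  have mq : q ∈ Icc p0 p1 := ⟨hp, hq⟩
  have cneg : ∀ c ∈ Icc c0 c1, ∀ p ∈ Icc p0 p1, F1 c p < 0 → Real.cos (θ (c,p)) < 0 := by
    intro c hc p hp h
    rw [hre' c hc p hp] at h
    exact (pos_iff_neg_of_mul_neg h).1 (hn _)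
  have start := cneg c0 mc0 p0 mp0 (hbot c0 mc0)
  have hpi := Real.pi_pos
  have s1 : Real.pi / 2 < θ (c0, p0) := by
    by_contra hh
    push Not at hh
    exact absurd (Real.cos_nonneg_of_neg_pi_div_two_le_of_le (by linarith) hh) (by linarith)
  have s2 : θ (c0, p0) < 3 * Real.pi / 2 := by
    by_contra hh
    push Not at hh
    have := Real.cos_nonneg_of_neg_pi_div_two_le_of_le (x := θ (c0,p0) - 2 * Real.pi) (by linarith) (by linarith)
    rw [Real.cos_sub_two_pi] at this
    linarith
  have b1 : Real.pi / 2 < θ (c1, p0) := by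
    refine stay_gt (φ := fun c => θ (c, p0)) (by fun_prop) (s := c0) s1 fun c hcc h => ?_
    rw [uIcc_of_le hc] at hcc
    have := cneg c hcc p0 mp0 (hbot c hcc)
    rw [h, Real.cos_pi_div_two] at this; exact lt_irrefl _ this
  have b2 : Real.pi / 2 < θ (c1, p1) := by
    refine stay_gt (φ := fun p => θ (c1, p)) (by fun_prop) (s := p0) b1 fun c hcc h => ?_
    rw [uIcc_of_le hpp] at hcc
    have := cneg c1 mc1 c hcc (hright c hcc)
    rw [h, Real.cos_pi_div_two] at this; exact lt_irrefl _ this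
  have b3 : Real.pi / 2 < θ (c0, p1) := by
    refine stay_gt (φ := fun c => θ (c, p1)) (by fun_prop) (s := c1) b2 fun c hcc h => ?_
    rw [uIcc_of_ge hc] at hcc
    have := cneg c hcc p1 mp1 (htop c hcc)
    rw [h, Real.cos_pi_div_two] at this; exact lt_irrefl _ this
  have l1 : θ (c0, q) < 3 * Real.pi / 2 := by
    refine stay_lt (φ := fun p => θ (c0, p)) (by fun_prop) (s := p0) s2 fun p hp' h => ?_
    rw [uIcc_of_le hp] at hp'
    have mp : p ∈ Icc p0 p1 := ⟨hp'.1, hp'.2.trans hq⟩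
    have h1 := hre' c0 mc0 p mp
    have h2 := him' c0 mc0 p mp
    have e : 3 * Real.pi / 2 = Real.pi / 2 + Real.pi := by ring
    rw [h, e, Real.cos_add_pi, Real.cos_pi_div_two] at h1
    rw [h, e, Real.sin_add_pi, Real.sin_pi_div_two] at h2
    have := hlow p hp' (by simpa using h1)
    have := hn (c0, p)
    linarith
  have l2 : θ (c0, q) < Real.pi / 2 := by
    by_contra hh
    push Not at hh
    have := Real.cos_nonpos_of_pi_div_two_le_of_le hh (by linarith)
    have h1 := hre' c0 mc0 q mq
    nlinarith [hn (c0, q)]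
  have l3 : θ (c0, p1) < Real.pi / 2 := by
    refine stay_lt (φ := fun p => θ (c0, p)) (by fun_prop) (s := q) l2 fun p hp' h => ?_
    rw [uIcc_of_le hq] at hp'
    have mp : p ∈ Icc p0 p1 := ⟨hp.trans hp'.1, hp'.2⟩
    have h1 := hre' c0 mc0 p mp
    have h2 := him' c0 mc0 p mp
    rw [h, Real.cos_pi_div_two] at h1
    rw [h, Real.sin_pi_div_two] at h2
    have := hup p hp' (by simpa using h1)
    have := hn (c0, p)
    linarith
  linarith

lemma key_int {κ : ℝ → ℝ} (hκ : ∀ x y, IntervalIntegrable κ volume x y) (h0 : ∀ x, 0 ≤ κ x)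
    {t0 t : ℝ} (ht : t0 ≤ t) :
    ∫ s in t0..t, κ s * Real.exp (2 * ∫ r in t0..s, κ r) ≤ Real.exp (2 * ∫ r in t0..t, κ r) / 2 := by
  set A : ℝ → ℝ := fun s => ∫ r in t0..s, κ r with hA
  have hmono : Monotone A := by
    intro x y hxy
    have : A y - A x = ∫ r in x..y, κ r := intervalIntegral.integral_interval_sub_left (hκ _ _) (hκ _ _)
    have h2 : 0 ≤ ∫ r in x..y, κ r := intervalIntegral.integral_nonneg hxy fun _ _ => h0 _
    linarith
  set E : ℝ → ℝ := fun s => Real.exp (2 * A s) / 2 with hE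
  have hEm : Monotone E := by
    intro x y hxy
    have := hmono hxy
    simp only [hE]
    gcongr
  have h1 := (hEm.monotoneOn (uIcc t0 t)).intervalIntegral_deriv_mem_uIcc
  rw [uIcc_of_le (sub_nonneg.2 (hEm ht))] at h1
  have h2 : ∫ x in t0..t, deriv E x = ∫ s in t0..t, κ s * Real.exp (2 * A s) := by
    apply intervalIntegral.integral_congr_ae
    filter_upwards [(hκ t0 t).ae_hasDerivAt_integral] with x hx hxm
    have hd := hx (uIoc_subset_uIcc hxm) t0 (by simp)
    have : HasDerivAt E (κ x * Real.exp (2 * A x)) x := by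
      have := ((hd.const_mul 2).exp).div_const 2
      have e : κ x * Real.exp (2 * A x) = Real.exp (2 * A x) * (2 * κ x) / 2 := by ring
      rw [e]; exact this
    exact this.deriv
  rw [← h2]
  have : 0 < E t0 := by simp only [hE]; positivity
  have := h1.2
  simp only [hE] at *
  linarith

lemma gronwall_fwd {κ w : ℝ → ℝ} (hκ : ∀ x y, IntervalIntegrable κ volume x y) (h0 : ∀ x, 0 ≤ κ x)
    (hw : Continuous w) (hw0 : ∀ x, 0 ≤ w x) {C t0 t1 : ℝ} (h01 : t0 ≤ t1)
    (h : ∀ t ∈ Icc t0 t1, w t ≤ C + ∫ s in t0..t, κ s * w s) :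
    ∀ t ∈ Icc t0 t1, w t ≤ 2 * C * Real.exp (2 * ∫ s in t0..t1, κ s) := by
  set A : ℝ → ℝ := fun s => ∫ r in t0..s, κ r with hA
  have hC : 0 ≤ C := by
    have := h t0 ⟨le_rfl, h01⟩
    simp at this; linarith [hw0 t0]
  have hAc : Continuous A := intervalIntegral.continuous_primitive hκ t0
  have hA0 : ∀ t ∈ Icc t0 t1, 0 ≤ A t := fun t ht =>
    intervalIntegral.integral_nonneg ht.1 fun _ _ => h0 _
  obtain ⟨ts, hts, hmax⟩ := isCompact_Icc.exists_isMaxOn (nonempty_Icc.2 h01) 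
    (f := fun t => w t * Real.exp (-(2 * A t))) (by fun_prop)
  set M := w ts * Real.exp (-(2 * A ts)) with hM
  have hM0 : 0 ≤ M := mul_nonneg (hw0 _) (Real.exp_pos _).le
  have hle : ∀ t ∈ Icc t0 t1, w t ≤ M * Real.exp (2 * A t) := by
    intro t ht
    have : w t * Real.exp (-(2 * A t)) ≤ M := hmax ht
    calc w t = w t * Real.exp (-(2 * A t)) * Real.exp (2 * A t) := by
          rw [mul_assoc, ← Real.exp_add]; simp
      _ ≤ _ := by gcongr
  have h1 : ∫ s in t0..ts, κ s * w s ≤ M * (Real.exp (2 * A ts) / 2) := by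
    calc ∫ s in t0..ts, κ s * w s ≤ ∫ s in t0..ts, M * (κ s * Real.exp (2 * A s)) := by
          apply intervalIntegral.integral_mono_on hts.1
          · exact (hκ _ _).mul_continuousOn hw.continuousOn
          · exact ((hκ _ _).mul_continuousOn (by fun_prop)).const_mul _
          · intro s hs
            have := mul_le_mul_of_nonneg_left (hle s ⟨hs.1, hs.2.trans hts.2⟩) (h0 s)
            linarith
      _ = M * ∫ s in t0..ts, κ s * Real.exp (2 * A s) := by rw [intervalIntegral.integral_const_mul]
      _ ≤ _ := by gcongr; exact key_int hκ h0 hts.1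
  have h2 := h ts hts
  have hexp : Real.exp (2 * A ts) * Real.exp (-(2 * A ts)) = 1 := by rw [← Real.exp_add]; simp
  have hM2 : M ≤ 2 * C := by
    have h3 : M ≤ (C + M * (Real.exp (2 * A ts) / 2)) * Real.exp (-(2 * A ts)) := by
      rw [hM]; gcongr; linarith
    have h4 : (C + M * (Real.exp (2 * A ts) / 2)) * Real.exp (-(2 * A ts)) = 
      C * Real.exp (-(2 * A ts)) + M / 2 := by
      linear_combination (M / 2) * hexp
    have h5 : Real.exp (-(2 * A ts)) ≤ 1 := by
      rw [Real.exp_le_one_iff]; linarith [hA0 ts hts]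
    nlinarith
  intro t ht
  have hAt : A t ≤ A t1 := by
    have : A t1 - A t = ∫ r in t..t1, κ r := intervalIntegral.integral_interval_sub_left (hκ _ _) (hκ _ _)
    have h2 : 0 ≤ ∫ r in t..t1, κ r := intervalIntegral.integral_nonneg ht.2 fun _ _ => h0 _
    linarith
  calc w t ≤ M * Real.exp (2 * A t) := hle t ht
    _ ≤ 2 * C * Real.exp (2 * A t1) := by gcongr

lemma gronwall_bwd {κ w : ℝ → ℝ} (hκ : ∀ x y, IntervalIntegrable κ volume x y) (h0 : ∀ x, 0 ≤ κ x)
    (hw : Continuous w) (hw0 : ∀ x, 0 ≤ w x) {C t0 t1 : ℝ} (h01 : t0 ≤ t1)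
    (h : ∀ t ∈ Icc t0 t1, w t ≤ C + ∫ s in t..t1, κ s * w s) :
    ∀ t ∈ Icc t0 t1, w t ≤ 2 * C * Real.exp (2 * ∫ s in t0..t1, κ s) := by
  have h1 := gronwall_fwd (κ := fun s => κ (-s)) (w := fun s => w (-s)) (C := C) (t0 := -t1) (t1 := -t0)
    (fun x y => by 
      have := (hκ (-x) (-y)).comp_mul_left (c := -1)
      simpa using this) (fun x => h0 _) (by fun_prop) (fun x => hw0 _) (by linarith)
    (by
      intro t ht
      have := h (-t) ⟨by linarith [ht.2], by linarith [ht.1]⟩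
      have e := intervalIntegral.integral_comp_neg (fun s => κ s * w s) (a := -t1) (b := t)
      rw [e]; simpa using this)
  intro t ht
  have := h1 (-t) ⟨by linarith [ht.2], by linarith [ht.1]⟩
  have e := intervalIntegral.integral_comp_neg κ (a := -t1) (b := -t0)
  rw [e] at this
  simpa using this

/-- Global (continuous) pair solving the integral equations on `[0,T]`. -/
structure VSol (T : ℝ) (b G u q : ℝ → ℝ) : Prop where
  cu : Continuous u
  cq : Continuous q
  eu : ∀ t ∈ Icc 0 T, u t = u 0 + ∫ s in (0:ℝ)..t, q s
  eq : ∀ t ∈ Icc 0 T, q t = q 0 - ∫ s in (0:ℝ)..t, b s * G (u s)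

section ode
variable {T K : ℝ} {b G : ℝ → ℝ}

lemma vsol_exists (hT : 0 < T) (hb : ∀ x y, IntervalIntegrable b volume x y) (hK : 0 ≤ K)
    (hG : ∀ x y, |G x - G y| ≤ K * |x - y|) (c p : ℝ) :
    ∃ u q, VSol T b G u q ∧ u 0 = c ∧ q 0 = p := by
  have hGc : Continuous G := by
    have : LipschitzWith ⟨K, hK⟩ G := LipschitzWith.of_dist_le_mul fun x y => by
      rw [Real.dist_eq, Real.dist_eq]; exact hG x y
    exact this.continuous
  set κ : ℝ → ℝ := fun s => T * K * |b s| with hκd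
  have hκ : ∀ x y, IntervalIntegrable κ volume x y := fun x y => ((hb x y).abs).const_mul _
  have hκ0 : ∀ x, 0 ≤ κ x := fun x => by positivity
  set A : ℝ → ℝ := fun s => ∫ r in (0:ℝ)..s, κ r with hA
  have hAc : Continuous A := intervalIntegral.continuous_primitive hκ 0
  have ii : ∀ (v : ℝ → ℝ), Continuous v → ∀ x y, IntervalIntegrable (fun r => b r * G (v r)) volume x y :=
    fun v hv x y => (hb x y).mul_continuousOn (hGc.comp hv).continuousOn
  let ext : C(Icc 0 T, ℝ) → ℝ → ℝ := fun v r => Real.exp (2 * A r) * IccExtend hT.le v r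
  have cext : ∀ v, Continuous (ext v) := fun v => by
    have : Continuous (IccExtend hT.le v) := v.continuous.Icc_extend'
    simp only [ext]; fun_prop
  let Q : C(Icc 0 T, ℝ) → ℝ → ℝ := fun v s => p - ∫ r in (0:ℝ)..s, b r * G (ext v r)
  have cQ : ∀ v, Continuous (Q v) := fun v => 
    continuous_const.sub (intervalIntegral.continuous_primitive (ii _ (cext v)) 0)
  let U : C(Icc 0 T, ℝ) → ℝ → ℝ := fun v s => c + ∫ r in (0:ℝ)..s, Q v r
  have cU : ∀ v, Continuous (U v) := fun v => 
    continuous_const.add (intervalIntegral.continuous_primitive (fun x y => (cQ v).intervalIntegrable x y) 0)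
  let Ψ : C(Icc 0 T, ℝ) → C(Icc 0 T, ℝ) := fun v => ⟨fun t => Real.exp (-(2 * A t)) * U v t, by
    have := cU v; fun_prop⟩
  have hexp : ∀ s, Real.exp (-(2 * A s)) * Real.exp (2 * A s) = 1 := fun s => by rw [← Real.exp_add]; simp
  have hcontr : ContractingWith (1/2) Ψ := by
    refine ⟨by norm_num [← NNReal.coe_lt_coe], LipschitzWith.of_dist_le_mul fun v w => ?_⟩
    rw [ContinuousMap.dist_le (by positivity)]
    intro t
    set D := dist v w with hD
    have hD0 : 0 ≤ D := dist_nonneg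
    have hvw : ∀ r, |G (ext v r) - G (ext w r)| ≤ K * (Real.exp (2 * A r) * D) := by
      intro r
      refine (hG _ _).trans ?_
      gcongr
      simp only [ext]
      rw [← mul_sub, abs_mul, Real.abs_exp]
      gcongr
      have := ContinuousMap.dist_apply_le_dist (f := v) (g := w) (projIcc 0 T hT.le r)
      rwa [Real.dist_eq] at this
    have hQ : ∀ s ∈ Icc (0:ℝ) t, T * |Q v s - Q w s| ≤ D * (Real.exp (2 * A t) / 2) := by
      intro s hs
      have e1 : Q v s - Q w s = ∫ r in (0:ℝ)..s, (b r * G (ext w r) - b r * G (ext v r)) := by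
        rw [intervalIntegral.integral_sub (ii _ (cext w) _ _) (ii _ (cext v) _ _)]
        simp only [Q]; ring
      rw [e1]
      have h1 : |∫ r in (0:ℝ)..s, (b r * G (ext w r) - b r * G (ext v r))| ≤ 
          ∫ r in (0:ℝ)..s, |b r| * (K * (Real.exp (2 * A r) * D)) := by
        refine (intervalIntegral.abs_integral_le_integral_abs hs.1).trans ?_
        apply intervalIntegral.integral_mono_on hs.1
        · exact ((ii _ (cext w) _ _).sub (ii _ (cext v) _ _)).abs
        · exact (hb _ _).abs.mul_continuousOn (by fun_prop)
        · intro r _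
          rw [← mul_sub, abs_mul, abs_sub_comm]
          gcongr
          exact hvw r
      have h2 : T * ∫ r in (0:ℝ)..s, |b r| * (K * (Real.exp (2 * A r) * D)) = 
          D * ∫ r in (0:ℝ)..s, κ r * Real.exp (2 * A r) := by
        rw [← intervalIntegral.integral_const_mul, ← intervalIntegral.integral_const_mul]
        congr 1; ext r; simp only [hκd]; ring
      have h3 := key_int hκ hκ0 hs.1
      have h4 : A s ≤ A t := by
        have : A t - A s = ∫ r in s..t, κ r := intervalIntegral.integral_interval_sub_left (hκ _ _) (hκ _ _)
        have h2 : 0 ≤ ∫ r in s..t, κ r := intervalIntegral.integral_nonneg hs.2 fun _ _ => hκ0 _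
        linarith
      calc _ ≤ T * ∫ r in (0:ℝ)..s, |b r| * (K * (Real.exp (2 * A r) * D)) := by gcongr
        _ = _ := h2
        _ ≤ D * (Real.exp (2 * A s) / 2) := by gcongr
        _ ≤ _ := by gcongr
    have hU : |U v t - U w t| ≤ D * (Real.exp (2 * A t) / 2) := by
      have e1 : U v t - U w t = ∫ r in (0:ℝ)..t, (Q v r - Q w r) := by
        rw [intervalIntegral.integral_sub ((cQ v).intervalIntegrable _ _) ((cQ w).intervalIntegrable _ _)]
        simp only [U]; ring
      rw [e1]
      have h1 : ‖∫ r in (0:ℝ)..t, (Q v r - Q w r)‖ ≤ (D * (Real.exp (2 * A t) / 2) / T) * |(t:ℝ) - 0| := by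
        apply intervalIntegral.norm_integral_le_of_norm_le_const
        intro r hr
        rw [uIoc_of_le t.2.1] at hr
        rw [le_div_iff₀ hT, mul_comm]
        exact hQ r ⟨hr.1.le, hr.2⟩
      rw [Real.norm_eq_abs] at h1
      refine h1.trans ?_
      rw [sub_zero, abs_of_nonneg t.2.1, div_mul_eq_mul_div, div_le_iff₀ hT]
      have := t.2.2
      gcongr
    simp only [Ψ, ContinuousMap.coe_mk, Real.dist_eq]
    rw [← mul_sub, abs_mul, Real.abs_exp]
    calc _ ≤ Real.exp (-(2 * A t)) * (D * (Real.exp (2 * A t) / 2)) := by gcongr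
      _ = (D / 2) * (Real.exp (-(2 * A t)) * Real.exp (2 * A t)) := by ring
      _ ≤ _ := by rw [hexp]; simp; linarith
  set v := ContractingWith.fixedPoint Ψ hcontr with hv
  have hfix : Ψ v = v := hcontr.fixedPoint_isFixedPt
  have hUe : ∀ t ∈ Icc 0 T, ext v t = U v t := by
    intro t ht
    have := congrArg (fun f : C(Icc 0 T, ℝ) => f ⟨t, ht⟩) hfix
    simp only [Ψ, ContinuousMap.coe_mk] at this
    simp only [ext, IccExtend_of_mem hT.le _ ht]
    rw [← this, ← mul_assoc, mul_comm (Real.exp _), hexp, one_mul]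
  refine ⟨U v, Q v, ⟨cU v, cQ v, ?_, ?_⟩, by simp [U], by simp [Q]⟩
  · intro t ht; simp [U]
  · intro t ht
    simp only [Q, intervalIntegral.integral_same, sub_zero, sub_right_inj]
    apply intervalIntegral.integral_congr
    intro r hr
    rw [uIcc_of_le ht.1] at hr
    simp only
    rw [hUe r ⟨hr.1, hr.2.trans ht.2⟩]


/-- Pair solving the system on `[α,β]`, in increment form. -/
structure VS (α β : ℝ) (b G u q : ℝ → ℝ) : Prop where
  cu : Continuous u
  cq : Continuous q
  eu : ∀ s ∈ Icc α β, ∀ t ∈ Icc α β, u t - u s = ∫ r in s..t, q r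
  eq : ∀ s ∈ Icc α β, ∀ t ∈ Icc α β, q t - q s = - ∫ r in s..t, b r * G (u r)

lemma VS.mono {α β α' β' : ℝ} {u q : ℝ → ℝ} (h : VS α β b G u q) (h1 : α ≤ α') (h2 : β' ≤ β) :
    VS α' β' b G u q :=
  ⟨h.cu, h.cq, fun s hs t ht => h.eu s ⟨h1.trans hs.1, hs.2.trans h2⟩ t ⟨h1.trans ht.1, ht.2.trans h2⟩,
    fun s hs t ht => h.eq s ⟨h1.trans hs.1, hs.2.trans h2⟩ t ⟨h1.trans ht.1, ht.2.trans h2⟩⟩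

lemma lip_cont (hK : 0 ≤ K) (hG : ∀ x y, |G x - G y| ≤ K * |x - y|) : Continuous G := by
  have : LipschitzWith ⟨K, hK⟩ G := LipschitzWith.of_dist_le_mul fun x y => by
    rw [Real.dist_eq, Real.dist_eq]; exact hG x y
  exact this.continuous

lemma ii_of (hb : ∀ x y, IntervalIntegrable b volume x y) {h : ℝ → ℝ} (hh : Continuous h) :
    ∀ x y, IntervalIntegrable (fun r => b r * h r) volume x y :=
  fun x y => (hb x y).mul_continuousOn hh.continuousOn

lemma vs_exists (hT : 0 < T) (hb : ∀ x y, IntervalIntegrable b volume x y) (hK : 0 ≤ K)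
    (hG : ∀ x y, |G x - G y| ≤ K * |x - y|) (c p : ℝ) :
    ∃ u q, VS 0 T b G u q ∧ u 0 = c ∧ q 0 = p := by
  obtain ⟨u, q, h, h1, h2⟩ := vsol_exists hT hb hK hG c p
  have hGc := lip_cont hK hG
  refine ⟨u, q, ⟨h.cu, h.cq, fun s hs t ht => ?_, fun s hs t ht => ?_⟩, h1, h2⟩
  · rw [h.eu s hs, h.eu t ht, ← intervalIntegral.integral_interval_sub_left
      (h.cq.intervalIntegrable 0 t) (h.cq.intervalIntegrable 0 s)]
    ring
  · have := ii_of hb (hGc.comp h.cu)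
    simp only [Function.comp] at this
    rw [h.eq s hs, h.eq t ht, ← intervalIntegral.integral_interval_sub_left
      (this 0 t) (this 0 s)]
    simp

lemma ii_kappa (K : ℝ) (hb : ∀ x y, IntervalIntegrable b volume x y) : 
    ∀ x y, IntervalIntegrable (fun r => 1 + K * |b r|) volume x y :=
  fun x y => (intervalIntegrable_const (c := (1:ℝ))).add ((hb x y).abs.const_mul K)

/-- Pointwise increment bound for the difference of two solutions. -/
lemma vs_diff_step (hb : ∀ x y, IntervalIntegrable b volume x y) (hK : 0 ≤ K)
    (hG : ∀ x y, |G x - G y| ≤ K * |x - y|) {α β : ℝ} {u q v r : ℝ → ℝ}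
    (h1 : VS α β b G u q) (h2 : VS α β b G v r) {s t : ℝ} (hs : s ∈ Icc α β) (ht : t ∈ Icc α β)
    (hst : s ≤ t) :
    |(u t - v t) - (u s - v s)| + |(q t - r t) - (q s - r s)| ≤
      ∫ x in s..t, (1 + K * |b x|) * (|u x - v x| + |q x - r x|) := by
  have hGc := lip_cont hK hG
  have cu := h1.cu; have cq := h1.cq; have cv := h2.cu; have cr := h2.cq
  have iu := ii_of hb (hGc.comp cu)
  have iv := ii_of hb (hGc.comp cv)
  have e1 : (u t - v t) - (u s - v s) = ∫ x in s..t, (q x - r x) := by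
    rw [intervalIntegral.integral_sub (cq.intervalIntegrable _ _) (cr.intervalIntegrable _ _),
      ← h1.eu s hs t ht, ← h2.eu s hs t ht]; ring
  have e2 : (q t - r t) - (q s - r s) = ∫ x in s..t, (b x * G (v x) - b x * G (u x)) := by
    have a1 := h1.eq s hs t ht
    have a2 := h2.eq s hs t ht
    have := intervalIntegral.integral_sub (iv s t) (iu s t)
    simp only [Function.comp] at this
    rw [this]; linarith
  have f1 : |(u t - v t) - (u s - v s)| ≤ ∫ x in s..t, |q x - r x| := by
    rw [e1]; exact intervalIntegral.abs_integral_le_integral_abs hst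
  have f2 : |(q t - r t) - (q s - r s)| ≤ ∫ x in s..t, |b x| * (K * |u x - v x|) := by
    rw [e2]
    refine (intervalIntegral.abs_integral_le_integral_abs hst).trans ?_
    apply intervalIntegral.integral_mono_on hst
    · exact ((iv s t).sub (iu s t)).abs
    · exact (hb _ _).abs.mul_continuousOn (by fun_prop)
    · intro x _
      rw [← mul_sub, abs_mul, abs_sub_comm]
      gcongr
      exact hG _ _
  have i1 : IntervalIntegrable (fun x => |q x - r x|) volume s t := 
    (by fun_prop : Continuous fun x => |q x - r x|).intervalIntegrable _ _
  have i2 : IntervalIntegrable (fun x => |b x| * (K * |u x - v x|)) volume s t :=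
    (hb _ _).abs.mul_continuousOn (by fun_prop)
  calc _ ≤ (∫ x in s..t, |q x - r x|) + ∫ x in s..t, |b x| * (K * |u x - v x|) := add_le_add f1 f2
    _ = ∫ x in s..t, (|q x - r x| + |b x| * (K * |u x - v x|)) := 
        (intervalIntegral.integral_add i1 i2).symm
    _ ≤ _ := by
        apply intervalIntegral.integral_mono_on hst (i1.add i2)
        · exact (ii_kappa K hb s t).mul_continuousOn (by fun_prop)
        · intro x _
          have p1 : 0 ≤ K * |b x| * |q x - r x| := by positivity
          have p2 : 0 ≤ |u x - v x| := abs_nonneg _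
          nlinarith

lemma vs_fwd (hb : ∀ x y, IntervalIntegrable b volume x y) (hK : 0 ≤ K)
    (hG : ∀ x y, |G x - G y| ≤ K * |x - y|) {α β : ℝ} {u q v r : ℝ → ℝ} (hab : α ≤ β)
    (h1 : VS α β b G u q) (h2 : VS α β b G v r) : ∀ t ∈ Icc α β,
    |u t - v t| + |q t - r t| ≤ 2 * (|u α - v α| + |q α - r α|) * 
      Real.exp (2 * ∫ x in α..β, (1 + K * |b x|)) := by
  have cu := h1.cu; have cq := h1.cq; have cv := h2.cu; have cr := h2.cq
  refine gronwall_fwd (w := fun t => |u t - v t| + |q t - r t|) (ii_kappa K hb) (fun x => by positivity) 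
    (by fun_prop) (fun x => by positivity) hab fun t ht => ?_
  have := vs_diff_step hb hK hG h1 h2 (left_mem_Icc.2 hab) ht ht.1
  have a1 := abs_sub_abs_le_abs_sub (u t - v t) (u α - v α)
  have a2 := abs_sub_abs_le_abs_sub (q t - r t) (q α - r α)
  linarith

lemma vs_bwd (hb : ∀ x y, IntervalIntegrable b volume x y) (hK : 0 ≤ K)
    (hG : ∀ x y, |G x - G y| ≤ K * |x - y|) {α β : ℝ} {u q v r : ℝ → ℝ} (hab : α ≤ β)
    (h1 : VS α β b G u q) (h2 : VS α β b G v r) : ∀ t ∈ Icc α β,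
    |u t - v t| + |q t - r t| ≤ 2 * (|u β - v β| + |q β - r β|) * 
      Real.exp (2 * ∫ x in α..β, (1 + K * |b x|)) := by
  have cu := h1.cu; have cq := h1.cq; have cv := h2.cu; have cr := h2.cq
  refine gronwall_bwd (w := fun t => |u t - v t| + |q t - r t|) (ii_kappa K hb) (fun x => by positivity) 
    (by fun_prop) (fun x => by positivity) hab fun t ht => ?_
  have := vs_diff_step hb hK hG h1 h2 ht (right_mem_Icc.2 hab) ht.2
  have a1 := abs_sub_abs_le_abs_sub (u t - v t) (u β - v β)
  have a2 := abs_sub_abs_le_abs_sub (q t - r t) (q β - r β)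
  rw [abs_sub_comm (u t - v t)] at a1
  rw [abs_sub_comm (q t - r t)] at a2
  linarith

lemma vs_zero (hGn : ∀ s ≤ 0, G s = 0) (α β : ℝ) : VS α β b G (fun _ => 0) (fun _ => 0) :=
  ⟨by fun_prop, by fun_prop, by simp, by simp [hGn 0 le_rfl]⟩

lemma first_time {f : ℝ → ℝ} (hf : Continuous f) {α β : ℝ} (h : ∃ t ∈ Icc α β, 0 ≤ f t) :
    ∃ t ∈ Icc α β, 0 ≤ f t ∧ ∀ s ∈ Ico α t, f s < 0 := by
  have hc : IsCompact (Icc α β ∩ {t | 0 ≤ f t}) := 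
    isCompact_Icc.inter_right (isClosed_le continuous_const hf)
  obtain ⟨t, ht, hl⟩ := hc.exists_isLeast (by obtain ⟨t, h1, h2⟩ := h; exact ⟨t, h1, h2⟩)
  refine ⟨t, ht.1, ht.2, fun s hs => ?_⟩
  by_contra hh
  push Not at hh
  have := hl (show s ∈ _ from ⟨⟨hs.1, hs.2.le.trans ht.1.2⟩, hh⟩)
  linarith [hs.2]

lemma last_time {f : ℝ → ℝ} (hf : Continuous f) {α β : ℝ} (h : ∃ t ∈ Icc α β, 0 ≤ f t) :
    ∃ t ∈ Icc α β, 0 ≤ f t ∧ ∀ s ∈ Ioc t β, f s < 0 := by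
  obtain ⟨t, h1, h2⟩ := h
  obtain ⟨t, ht, h0, hl⟩ := first_time (f := fun s => f (-s)) (by fun_prop) (α := -β) (β := -α)
    ⟨-t, ⟨by linarith [h1.2], by linarith [h1.1]⟩, by simpa using h2⟩
  refine ⟨-t, ⟨by linarith [ht.2], by linarith [ht.1]⟩, h0, fun s hs => ?_⟩
  have := hl (-s) ⟨by linarith [hs.2], by linarith [hs.1]⟩
  simpa using this

/-- After the first zero, the solution is linear and nonincreasing. -/
lemma vs_hit (hb : ∀ x y, IntervalIntegrable b volume x y) (hK : 0 ≤ K)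
    (hG : ∀ x y, |G x - G y| ≤ K * |x - y|) (hGn : ∀ s ≤ 0, G s = 0) 
    {u q : ℝ → ℝ} (h1 : VS 0 T b G u q) (hu0 : 0 < u 0) (hz : ∃ t ∈ Icc 0 T, u t ≤ 0) :
    ∃ t1 ∈ Icc 0 T, u t1 = 0 ∧ q t1 ≤ 0 ∧ ∀ t ∈ Icc t1 T, u t = q t1 * (t - t1) ∧ q t = q t1 := by
  have cu := h1.cu
  have cq := h1.cq
  obtain ⟨t1, ht1, hle, hpos⟩ := first_time (f := fun t => - u t) (by fun_prop) (α := 0) (β := T)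
    (by obtain ⟨t, a1, a2⟩ := hz; exact ⟨t, a1, by linarith⟩)
  have h0t : 0 < t1 := by
    rcases ht1.1.eq_or_lt with h | h
    · rw [← h] at hle; linarith
    · exact h
  have hu1 : u t1 = 0 := by
    refine le_antisymm (by linarith) ?_
    have hcl : t1 ∈ closure (Ico 0 t1) := by
      rw [closure_Ico h0t.ne]; exact ⟨h0t.le, le_rfl⟩
    have : Ico 0 t1 ⊆ {t | 0 ≤ u t} := fun s hs => by have := hpos s hs; show 0 ≤ u s; linarith
    exact closure_minimal this (isClosed_le continuous_const cu) hcl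
  have hq1 : q t1 ≤ 0 := by
    by_contra hh
    push Not at hh
    have hev : ∀ᶠ s in nhds t1, 0 < q s := cq.continuousAt.eventually_const_lt hh
    obtain ⟨d, hd, hball⟩ := Metric.eventually_nhds_iff.1 hev
    set s := max 0 (t1 - d / 2) with hs
    have hs1 : s < t1 := max_lt h0t (by linarith)
    have hs0 : 0 ≤ s := le_max_left _ _
    have hs2 : t1 - d / 2 ≤ s := le_max_right _ _
    have := h1.eu s ⟨hs0, hs1.le.trans ht1.2⟩ t1 ht1
    have hge : 0 ≤ ∫ r in s..t1, q r := intervalIntegral.integral_nonneg hs1.le fun r hr => by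
      refine (hball ?_).le
      rw [Real.dist_eq, abs_lt]; constructor <;> linarith [hr.1, hr.2]
    have := hpos s ⟨hs0, hs1⟩
    linarith
  refine ⟨t1, ht1, hu1, hq1, ?_⟩
  have hlin : VS t1 T b G (fun t => q t1 * (t - t1)) (fun _ => q t1) := by
    refine ⟨by fun_prop, by fun_prop, fun s hs t ht => by simp; ring, fun s hs t ht => ?_⟩
    have : ∫ r in s..t, b r * G (q t1 * (r - t1)) = ∫ r in s..t, (0:ℝ) := by
      apply intervalIntegral.integral_congr
      intro r hr
      have hr' : t1 ≤ r := (le_inf hs.1 ht.1).trans hr.1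
      simp only
      rw [hGn _ (mul_nonpos_of_nonpos_of_nonneg hq1 (by linarith)), mul_zero]
    rw [this]; simp
  intro t ht
  have := vs_fwd hb hK hG ht1.2 (h1.mono ht1.1 le_rfl) hlin t ht
  simp only [hu1, sub_self, mul_zero, abs_zero, add_zero, zero_mul] at this
  have a1 := abs_nonneg (u t - q t1 * (t - t1))
  have a2 := abs_nonneg (q t - q t1)
  exact ⟨by linarith [abs_eq_zero.1 (by linarith : |u t - q t1 * (t - t1)| = 0)], 
    by linarith [abs_eq_zero.1 (by linarith : |q t - q t1| = 0)]⟩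

end ode

section core
variable {T K : ℝ} {b G : ℝ → ℝ}

lemma far_bound (hb : ∀ x y, IntervalIntegrable b volume x y)
    (hK : 0 ≤ K) (hG : ∀ x y, |G x - G y| ≤ K * |x - y|) (hGn : ∀ s ≤ 0, G s = 0) 
    (hG0 : ∀ s, 0 ≤ G s)
    {k S : ℝ} (hk : 0 < k) (hlow : ∀ s, 0 ≤ s → k * (s - S) ≤ G s)
    {x₁ x₂ δ : ℝ} (hx1 : 0 ≤ x₁) (hx2 : x₂ ≤ T) (hδ : 0 < δ) (hy : x₁ + δ ≤ x₂ - δ)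
    (hbJ : ∀ᵐ x ∂(volume.restrict (Icc x₁ x₂)), 0 ≤ b x)
    (hν : 4 * (x₂ - x₁) / δ ^ 2 ≤ (∫ x in (x₁ + δ)..(x₂ - δ), b x) * k) :
    ∃ R, ∀ u q : ℝ → ℝ, VS 0 T b G u q → (∀ t ∈ Icc 0 T, 0 < u t) → |u 0| + |q 0| ≤ R := by
  set B := 2 * S * ((x₂ - x₁) / δ) with hB
  refine ⟨2 * (B + B / δ) * Real.exp (2 * ∫ x in (0:ℝ)..(x₁ + δ), (1 + K * |b x|)), ?_⟩
  intro u q h hpos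
  have hGc := lip_cont hK hG
  have cu := h.cu
  have cq := h.cq
  set y1 := x₁ + δ with hy1
  set y2 := x₂ - δ with hy2
  have sub : ∀ {t}, t ∈ Icc x₁ x₂ → t ∈ Icc 0 T := fun ht => ⟨hx1.trans ht.1, ht.2.trans hx2⟩
  have hbJ' : ∀ s t, x₁ ≤ s → t ≤ x₂ → ∀ᵐ x ∂(volume.restrict (Icc s t)), 0 ≤ b x := fun s t hs ht =>
    ae_restrict_of_ae_restrict_of_subset (Icc_subset_Icc hs ht) hbJ
  have anti : ∀ s t, x₁ ≤ s → s ≤ t → t ≤ x₂ → q t ≤ q s := by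
    intro s t hs hst ht
    have := h.eq s (sub ⟨hs, hst.trans ht⟩) t (sub ⟨hs.trans hst, ht⟩)
    have h2 : 0 ≤ ∫ r in s..t, b r * G (u r) := by
      apply intervalIntegral.integral_nonneg_of_ae_restrict hst
      filter_upwards [hbJ' s t hs ht] with x hx
      exact mul_nonneg hx (hG0 _)
    linarith
  -- integral bounds
  have up : ∀ s t, x₁ ≤ s → s ≤ t → t ≤ x₂ → u t - u s ≤ (t - s) * q s := by
    intro s t hs hst ht
    rw [h.eu s (sub ⟨hs, hst.trans ht⟩) t (sub ⟨hs.trans hst, ht⟩)]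
    calc _ ≤ ∫ _ in s..t, q s := by
          apply intervalIntegral.integral_mono_on hst (cq.intervalIntegrable _ _) (by simp)
          intro x hx; exact anti s x hs hx.1 (hx.2.trans ht)
      _ = _ := by simp
  have lo : ∀ s t, x₁ ≤ s → s ≤ t → t ≤ x₂ → (t - s) * q t ≤ u t - u s := by
    intro s t hs hst ht
    rw [h.eu s (sub ⟨hs, hst.trans ht⟩) t (sub ⟨hs.trans hst, ht⟩)]
    calc _ = ∫ _ in s..t, q t := by simp
      _ ≤ _ := by
          apply intervalIntegral.integral_mono_on hst (by simp) (cq.intervalIntegrable _ _)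
          intro x hx; exact anti x t (hs.trans hx.1) hx.2 ht
  have m1 : x₁ ≤ y1 := by linarith
  have m2 : y2 ≤ x₂ := by linarith
  have pu : ∀ t, x₁ ≤ t → t ≤ x₂ → 0 < u t := fun t a1 a2 => hpos t (sub ⟨a1, a2⟩)
  have px1 := pu x₁ le_rfl (by linarith)
  have px2 := pu x₂ (by linarith) le_rfl
  have py1 := pu y1 (by linarith) (by linarith)
  have py2 := pu y2 (by linarith) (by linarith)
  have q1 : δ * q y1 ≤ u y1 := by
    have := lo x₁ y1 le_rfl m1 (by linarith)
    have e : y1 - x₁ = δ := by linarith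
    rw [e] at this; linarith
  have q2 : -(u y2) ≤ δ * q y2 := by
    have := up y2 x₂ (by linarith) m2 le_rfl
    have e : x₂ - y2 = δ := by linarith
    rw [e] at this; linarith
  have c1 : δ * u y2 ≤ (x₂ - x₁) * u y1 := by
    have h1 := up y1 y2 m1 hy m2
    have h2 : (y2 - y1) * (δ * q y1) ≤ (y2 - y1) * u y1 := mul_le_mul_of_nonneg_left q1 (by linarith)
    have h3 := mul_le_mul_of_nonneg_left h1 hδ.le
    have e : x₂ - x₁ = (y2 - y1) + 2 * δ := by linarith
    rw [e]
    nlinarith [mul_pos hδ py1]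
  have c2 : δ * u y1 ≤ (x₂ - x₁) * u y2 := by
    have h1 := lo y1 y2 m1 hy m2
    have h2 : (y2 - y1) * (-(u y2)) ≤ (y2 - y1) * (δ * q y2) := mul_le_mul_of_nonneg_left q2 (by linarith)
    have h3 := mul_le_mul_of_nonneg_left h1 hδ.le
    have e : x₂ - x₁ = (y2 - y1) + 2 * δ := by linarith
    rw [e]
    nlinarith [mul_pos hδ py2]
  set m := min (u y1) (u y2) with hm
  have mpos : 0 < m := lt_min py1 py2
  have hms : ∀ s ∈ Icc y1 y2, m ≤ u s := by
    intro s hs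
    rcases le_total 0 (q s) with hq | hq
    · have := lo y1 s m1 hs.1 (hs.2.trans m2)
      have := mul_nonneg (sub_nonneg.2 hs.1) hq
      linarith [min_le_left (u y1) (u y2)]
    · have := up s y2 (m1.trans hs.1) hs.2 m2
      have := mul_nonpos_of_nonneg_of_nonpos (sub_nonneg.2 hs.2) hq
      linarith [min_le_right (u y1) (u y2)]
  have hint : (∫ x in y1..y2, b x) * (k * (m - S)) ≤ q y1 - q y2 := by
    have e := h.eq y1 (sub ⟨m1, by linarith⟩) y2 (sub ⟨by linarith, m2⟩)
    have : q y1 - q y2 = ∫ r in y1..y2, b r * G (u r) := by linarith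
    rw [this, ← intervalIntegral.integral_mul_const]
    apply intervalIntegral.integral_mono_ae_restrict hy ((hb _ _).mul_const _) (ii_of hb (hGc.comp cu) _ _)
    filter_upwards [hbJ' y1 y2 m1 m2, ae_restrict_mem measurableSet_Icc] with x hx hxm
    refine mul_le_mul_of_nonneg_left ?_ hx
    refine le_trans ?_ (hlow _ (mpos.le.trans (hms x hxm)))
    have := hms x hxm
    gcongr
  have L0 : 0 < x₂ - x₁ := by linarith
  have M1 : δ * u y1 ≤ (x₂ - x₁) * m := by
    rcases min_choice (u y1) (u y2) with e | e
    · rw [hm, e]; nlinarith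
    · rw [hm, e]; exact c2
  have M2 : δ * u y2 ≤ (x₂ - x₁) * m := by
    rcases min_choice (u y1) (u y2) with e | e
    · rw [hm, e]; exact c1
    · rw [hm, e]; nlinarith
  have hmS : m ≤ 2 * S := by
    by_contra hc
    push Not at hc
    have h1 : δ ^ 2 * (q y1 - q y2) ≤ 2 * (x₂ - x₁) * m := by
      have := mul_le_mul_of_nonneg_left q1 hδ.le
      have := mul_le_mul_of_nonneg_left q2 hδ.le
      nlinarith
    have h2 : 4 * (x₂ - x₁) / δ ^ 2 * (m - S) ≤ q y1 - q y2 := by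
      refine le_trans ?_ hint
      rw [← mul_assoc]
      exact mul_le_mul_of_nonneg_right hν (by linarith)
    have h3 : 4 * (x₂ - x₁) * (m - S) ≤ δ ^ 2 * (q y1 - q y2) := by
      have := mul_le_mul_of_nonneg_left h2 (sq_nonneg δ)
      have e : δ ^ 2 * (4 * (x₂ - x₁) / δ ^ 2 * (m - S)) = 4 * (x₂ - x₁) * (m - S) := by
        field_simp
      linarith
    nlinarith
  have U1 : u y1 ≤ B := by
    rw [hB, ← mul_div_assoc, le_div_iff₀ hδ]; nlinarith
  have U2 : u y2 ≤ B := by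
    rw [hB, ← mul_div_assoc, le_div_iff₀ hδ]; nlinarith
  have Q : |q y1| ≤ B / δ := by
    rw [abs_le]
    constructor
    · have := anti y1 y2 m1 hy m2
      rw [← neg_div, div_le_iff₀ hδ]; nlinarith
    · rw [le_div_iff₀ hδ]; linarith
  have hT' : y1 ≤ T := by linarith
  have fin := vs_bwd hb hK hG (show (0:ℝ) ≤ y1 by linarith) (h.mono le_rfl hT') (vs_zero hGn 0 y1) 0
    ⟨le_rfl, by linarith⟩
  simp only [sub_zero] at fin
  refine fin.trans ?_
  have : |u y1| ≤ B := by rw [abs_of_pos py1]; exact U1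
  gcongr

lemma int_bG_le (hb : ∀ x y, IntervalIntegrable b volume x y) {h : ℝ → ℝ} (hc : Continuous h)
    {s t C : ℝ} (hs : 0 ≤ s) (hst : s ≤ t) (ht : t ≤ T) (hC : 0 ≤ C) (hh : ∀ x ∈ Icc s t, |h x| ≤ C) :
    |∫ x in s..t, b x * h x| ≤ (∫ x in (0:ℝ)..T, |b x|) * C := by
  calc _ ≤ ∫ x in s..t, |b x * h x| := intervalIntegral.abs_integral_le_integral_abs hst
    _ ≤ ∫ x in s..t, |b x| * C := by
        apply intervalIntegral.integral_mono_on hst (ii_of hb hc _ _).abs ((hb _ _).abs.mul_const _)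
        intro x hx
        rw [abs_mul]
        exact mul_le_mul_of_nonneg_left (hh x hx) (abs_nonneg _)
    _ = (∫ x in s..t, |b x|) * C := by rw [intervalIntegral.integral_mul_const]
    _ ≤ _ := by
        refine mul_le_mul_of_nonneg_right ?_ hC
        apply intervalIntegral.integral_mono_interval hs hst ht
        · filter_upwards with x; exact abs_nonneg _
        · exact (hb _ _).abs

set_option maxHeartbeats 2000000 in
lemma near_zero (hT : 0 < T) (hb : ∀ x y, IntervalIntegrable b volume x y)
    (hK : 0 ≤ K) (hG : ∀ x y, |G x - G y| ≤ K * |x - y|) (hGn : ∀ s ≤ 0, G s = 0) 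
    (hGp : ∀ s, 0 < s → 0 < G s)
    (hsmall : ∀ η > 0, ∃ r > 0, ∀ x y, x ≤ r → y ≤ r → |G x - G y| ≤ η * |x - y|)
    (hneg : ∫ x in (0:ℝ)..T, b x < 0) :
    ∃ ε > 0, ∃ Z ≥ 0, (∀ u q, VS 0 T b G u q → u 0 = ε → |q 0| ≤ Z → q 0 < q T) ∧
      (∀ u q, VS 0 T b G u q → u 0 = ε → q 0 = Z → ε < u T) ∧
      (∀ u q, VS 0 T b G u q → u 0 = ε → q 0 < -Z → u T < ε) ∧
      (∀ u q, VS 0 T b G u q → u 0 = ε → Z ≤ q 0 → u T = ε → q T < q 0) := by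
  have hGc := lip_cont hK hG
  have hG0 : ∀ s, 0 ≤ G s := fun s => by
    rcases le_or_gt s 0 with h | h
    · rw [hGn s h]
    · exact (hGp s h).le
  set N := ∫ x in (0:ℝ)..T, |b x| with hN
  have hN0 : 0 ≤ N := intervalIntegral.integral_nonneg hT.le fun _ _ => abs_nonneg _
  set σ := -∫ x in (0:ℝ)..T, b x with hσ
  have hσ0 : 0 < σ := by linarith
  set Z := 2 * N + 1 with hZ
  set μ := min (1/2) (σ / (2 * (N + 1))) with hμ
  have hμ0 : 0 < μ := lt_min (by norm_num) (by positivity)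
  have hμ1 : μ ≤ 1/2 := min_le_left _ _
  have hμ2 : μ * (2 * (N + 1)) ≤ σ := by
    rw [← le_div_iff₀ (by positivity)]; exact min_le_right _ _
  set η := min (1 / (2 * (T * N + 1))) (μ / (2 * T * (Z + N) + 1)) with hη
  have hη0 : 0 < η := lt_min (by positivity) (by positivity)
  have hη1 : η * (2 * (T * N + 1)) ≤ 1 := by
    rw [← le_div_iff₀ (by positivity)]; exact min_le_left _ _
  have hη2 : η * (2 * T * (Z + N) + 1) ≤ μ := by
    rw [← le_div_iff₀ (by positivity)]; exact min_le_right _ _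
  obtain ⟨r, hr, hrG⟩ := hsmall η hη0
  set Ex := Real.exp (2 * ∫ x in (0:ℝ)..T, (1 + K * |b x|)) with hEx
  have hEx0 : 0 < Ex := Real.exp_pos _
  set r' := min r (r / (2 * (1 + Z * K) * Ex)) with hr'
  have hr'0 : 0 < r' := lt_min hr (by positivity)
  obtain ⟨ε, hεm, hmax⟩ := isCompact_Icc.exists_isMaxOn (nonempty_Icc.2 hr'0.le) hGc.continuousOn
  have hGmax : ∀ s ≤ r', G s ≤ G ε := by
    intro s hs
    rcases le_or_gt s 0 with h | h
    · rw [hGn s h]; exact hG0 _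
    · exact hmax ⟨h.le, hs⟩
  have hGε : 0 < G ε := (hGp r' hr'0).trans_le (hGmax r' le_rfl)
  have hε : 0 < ε := by
    by_contra hc
    push Not at hc
    rw [hGn ε hc] at hGε; exact lt_irrefl _ hGε
  have hεr : ε ≤ r := hεm.2.trans (min_le_left _ _)
  have hεr2 : ε * (2 * (1 + Z * K) * Ex) ≤ r := by
    rw [← le_div_iff₀ (by positivity)]; exact hεm.2.trans (min_le_right _ _)
  have hGK : G ε ≤ K * ε := by
    have := hG ε 0
    rwa [hGn 0 le_rfl, sub_zero, sub_zero, abs_of_pos hGε, abs_of_pos hε] at this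
  have m0 : (0:ℝ) ∈ Icc 0 T := ⟨le_rfl, hT.le⟩
  have mT : T ∈ Icc 0 T := ⟨hT.le, le_rfl⟩
  -- main estimate
  have main : ∀ u q, VS 0 T b G u q → u 0 = ε → |q 0| ≤ Z * G ε → 
      ∀ t ∈ Icc 0 T, |G (u t) - G ε| ≤ μ * G ε := by
    intro u q h hu0 hq0
    have cu := h.cu
    have cq := h.cq
    have hur : ∀ t ∈ Icc 0 T, u t ≤ r := by
      intro t ht
      have := vs_fwd hb hK hG hT.le h (vs_zero hGn 0 T) t ht
      simp only [sub_zero, hu0, abs_of_pos hε] at this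
      have h1 : u t ≤ |u t| := le_abs_self _
      have h2 : 2 * (ε + |q 0|) * Ex ≤ ε * (2 * (1 + Z * K) * Ex) := by
        have : |q 0| ≤ Z * (K * ε) := hq0.trans (by gcongr)
        nlinarith
      linarith [abs_nonneg (q t)]
    obtain ⟨ts, hts, hD⟩ := isCompact_Icc.exists_isMaxOn (nonempty_Icc.2 hT.le) 
      (f := fun t => |u t - ε|) (by fun_prop)
    set D := |u ts - ε| with hDd
    have hD' : ∀ t ∈ Icc 0 T, |u t - ε| ≤ D := fun t ht => hD ht
    have hD0 : 0 ≤ D := abs_nonneg _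
    have hGD : ∀ t ∈ Icc 0 T, |G (u t) - G ε| ≤ η * D := fun t ht =>
      (hrG _ _ (hur t ht) hεr).trans (by gcongr; exact hD' t ht)
    have hq : ∀ t ∈ Icc 0 T, |q t| ≤ Z * G ε + N * (G ε + η * D) := by
      intro t ht
      have e := h.eq 0 m0 t ht
      have hi := int_bG_le (T := T) hb (hGc.comp cu) le_rfl ht.1 ht.2 (C := G ε + η * D) (by positivity)
        (fun x hx => by
          have := hGD x ⟨hx.1, hx.2.trans ht.2⟩
          simp only [Function.comp]
          rw [abs_of_nonneg (hG0 _)]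
          linarith [le_abs_self (G (u x) - G ε)])
      simp only [Function.comp] at hi
      have : q t = q 0 - ∫ r in (0:ℝ)..t, b r * G (u r) := by linarith
      rw [this]
      refine (abs_sub _ _).trans ?_
      linarith
    have hDle : D ≤ (Z * G ε + N * (G ε + η * D)) * T := by
      have e := h.eu 0 m0 ts hts
      rw [hu0] at e
      have hDe : D = ‖∫ x in (0:ℝ)..ts, q x‖ := by rw [Real.norm_eq_abs, ← e]
      have hn := intervalIntegral.norm_integral_le_of_norm_le_const (f := q) (a := 0) (b := ts)
        (C := Z * G ε + N * (G ε + η * D)) (fun x hx => by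
          rw [uIoc_of_le hts.1] at hx
          exact hq x ⟨hx.1.le, hx.2.trans hts.2⟩)
      rw [← hDe, sub_zero, abs_of_nonneg hts.1] at hn
      refine hn.trans ?_
      exact mul_le_mul_of_nonneg_left hts.2 (by positivity)
    have hD2 : D ≤ 2 * T * (Z + N) * G ε := by
      have : η * (T * N) * D ≤ (1/2) * D := by gcongr; linarith
      nlinarith
    intro t ht
    refine (hGD t ht).trans ?_
    calc η * D ≤ η * (2 * T * (Z + N) * G ε) := by gcongr
      _ = (η * (2 * T * (Z + N))) * G ε := by ring
      _ ≤ _ := by gcongr; linarith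
  refine ⟨ε, hε, Z * G ε, by positivity, ?_, ?_, ?_, ?_⟩
  · intro u q h hu0 hq0
    have cu := h.cu
    have hm := main u q h hu0 hq0
    have e := h.eq 0 m0 T mT
    have e1 : ∫ x in (0:ℝ)..T, b x * (G (u x) - G ε) = (∫ x in (0:ℝ)..T, b x * G (u x)) - 
        (∫ x in (0:ℝ)..T, b x) * G ε := by
      have i1 := ii_of hb (hGc.comp cu) 0 T
      simp only [Function.comp] at i1
      rw [← intervalIntegral.integral_mul_const, ← intervalIntegral.integral_sub
        i1 ((hb _ _).mul_const _)]
      congr 1; ext x; ring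
    have hi := int_bG_le (T := T) hb (h := fun x => G (u x) - G ε) (by fun_prop) le_rfl hT.le le_rfl 
      (C := μ * G ε) (by positivity) (fun x hx => hm x hx)
    have h2 := (abs_le.1 hi).2
    have h3 : N * (μ * G ε) < σ * G ε := by
      rw [← mul_assoc]
      gcongr
      nlinarith
    have h4 : (∫ x in (0:ℝ)..T, b x) * G ε = - (σ * G ε) := by rw [hσ]; ring
    linarith
  · intro u q h hu0 hq0
    have cu := h.cu
    have cq := h.cq
    have hm := main u q h hu0 (by rw [hq0, abs_of_nonneg (by positivity)])
    have hqt : ∀ t ∈ Icc 0 T, 0 < q t := by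
      intro t ht
      have e := h.eq 0 m0 t ht
      have hi := int_bG_le (T := T) hb (hGc.comp cu) le_rfl ht.1 ht.2 (C := G ε + 1/2 * G ε) (by positivity)
        (fun x hx => by
          have := hm x ⟨hx.1, hx.2.trans ht.2⟩
          have : μ * G ε ≤ 1/2 * G ε := by gcongr
          simp only [Function.comp]
          rw [abs_of_nonneg (hG0 _)]
          linarith [le_abs_self (G (u x) - G ε)])
      simp only [Function.comp] at hi
      have h2 := (abs_le.1 hi).2
      rw [hq0] at e
      nlinarith
    have e := h.eu 0 m0 T mT
    have := intervalIntegral.intervalIntegral_pos_of_pos_on (cq.intervalIntegrable 0 T)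
      (fun x hx => hqt x ⟨hx.1.le, hx.2.le⟩) hT
    linarith
  · intro u q h hu0 hq0
    have cu := h.cu
    have cq := h.cq
    have hqt : ∀ t ∈ Icc 0 T, q t < 0 := by
      by_contra hc
      push Not at hc
      obtain ⟨t, ht, hqt, hl⟩ := first_time cq hc
      have hu : ∀ s ∈ Icc 0 t, u s ≤ ε := by
        intro s hs
        have e := h.eu 0 m0 s ⟨hs.1, hs.2.trans ht.2⟩
        have : ∫ x in (0:ℝ)..s, q x ≤ ∫ x in (0:ℝ)..s, 0 := by
          apply intervalIntegral.integral_mono_on_of_le_Ioo hs.1 (cq.intervalIntegrable _ _) (by simp)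
          intro x hx; exact (hl x ⟨hx.1.le, hx.2.trans_le hs.2⟩).le
        simp at this
        linarith
      have e := h.eq 0 m0 t ht
      have hi := int_bG_le (T := T) hb (hGc.comp cu) le_rfl ht.1 ht.2 (C := G ε) hGε.le
        (fun x hx => by
          simp only [Function.comp]
          rw [abs_of_nonneg (hG0 _)]
          exact hGmax _ ((hu x hx).trans hεm.2))
      simp only [Function.comp] at hi
      have h2 := (abs_le.1 hi).1
      nlinarith
    have e := h.eu 0 m0 T mT
    have := intervalIntegral.intervalIntegral_pos_of_pos_on (f := fun x => - q x) (cq.neg.intervalIntegrable 0 T)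
      (fun x hx => by have := hqt x ⟨hx.1.le, hx.2.le⟩; linarith) hT
    rw [intervalIntegral.integral_neg] at this
    linarith
  · intro u q h hu0 hq0 huT
    have cu := h.cu
    have cq := h.cq
    by_contra hcc
    push Not at hcc
    have hqt : ∀ t ∈ Icc 0 T, - q t < 0 := by
      by_contra hc
      push Not at hc
      obtain ⟨t, ht, hqt, hl⟩ := last_time (f := fun t => - q t) cq.neg hc
      have hu : ∀ s ∈ Icc t T, u s ≤ ε := by
        intro s hs
        have e := h.eu s ⟨ht.1.trans hs.1, hs.2⟩ T mT
        have : ∫ x in s..T, 0 ≤ ∫ x in s..T, q x := by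
          apply intervalIntegral.integral_mono_on_of_le_Ioo hs.2 (by simp) (cq.intervalIntegrable _ _)
          intro x hx
          have := hl x ⟨hs.1.trans_lt hx.1, hx.2.le⟩
          linarith
        simp at this
        linarith
      have e := h.eq t ht T mT
      have hi := int_bG_le (T := T) hb (hGc.comp cu) ht.1 ht.2 le_rfl (C := G ε) hGε.le
        (fun x hx => by
          simp only [Function.comp]
          rw [abs_of_nonneg (hG0 _)]
          exact hGmax _ ((hu x hx).trans hεm.2))
      simp only [Function.comp] at hi
      have h2 := (abs_le.1 hi).1
      nlinarith
    have e := h.eu 0 m0 T mT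
    have := intervalIntegral.intervalIntegral_pos_of_pos_on (f := fun x => q x) (cq.intervalIntegrable 0 T)
      (fun x hx => by have := hqt x ⟨hx.1.le, hx.2.le⟩; linarith) hT
    linarith

end core

lemma core_sol {T K : ℝ} {b G : ℝ → ℝ} (hT : 0 < T) (hb : ∀ x y, IntervalIntegrable b volume x y)
    (hK : 0 ≤ K) (hG : ∀ x y, |G x - G y| ≤ K * |x - y|) (hGn : ∀ s ≤ 0, G s = 0) 
    (hGp : ∀ s, 0 < s → 0 < G s)
    (hsmall : ∀ η > 0, ∃ r > 0, ∀ x y, x ≤ r → y ≤ r → |G x - G y| ≤ η * |x - y|)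
    (hneg : ∫ x in (0:ℝ)..T, b x < 0)
    (hfar : ∃ R, ∀ u q : ℝ → ℝ, VS 0 T b G u q → (∀ t ∈ Icc 0 T, 0 < u t) → |u 0| + |q 0| ≤ R) :
    (∃ u q, VS 0 T b G u q ∧ (∀ t ∈ Icc 0 T, 0 < u t) ∧ q 0 = 0 ∧ q T = 0) ∧
    (∃ u q, VS 0 T b G u q ∧ (∀ t ∈ Icc 0 T, 0 < u t) ∧ u 0 = u T ∧ q 0 = q T) := by
  obtain ⟨ε, hε, Z, hZ, n1, n2, n3, n4⟩ := near_zero hT hb hK hG hGn hGp hsmall hneg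
  obtain ⟨R, hR⟩ := hfar
  choose u q hv hu0 hq0 using fun c p => vs_exists hT hb hK hG c p
  have mT : T ∈ Icc 0 T := ⟨hT.le, le_rfl⟩
  set Ex := Real.exp (2 * ∫ x in (0:ℝ)..T, (1 + K * |b x|)) with hEx
  have hEx0 : 0 < Ex := Real.exp_pos _
  have hdist : ∀ x y : ℝ × ℝ, |u x.1 x.2 T - u y.1 y.2 T| + |q x.1 x.2 T - q y.1 y.2 T| ≤ 
      4 * Ex * dist x y := by
    intro x y
    have := vs_fwd hb hK hG hT.le (hv x.1 x.2) (hv y.1 y.2) T mT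
    rw [hu0, hu0, hq0, hq0] at this
    refine this.trans ?_
    have h1 : |x.1 - y.1| ≤ dist x y := by rw [Prod.dist_eq, ← Real.dist_eq]; exact le_max_left _ _
    have h2 : |x.2 - y.2| ≤ dist x y := by rw [Prod.dist_eq, ← Real.dist_eq]; exact le_max_right _ _
    nlinarith
  have cu : Continuous (fun x : ℝ × ℝ => u x.1 x.2 T) :=
    (LipschitzWith.of_dist_le' (K := 4 * Ex) fun x y => by
      rw [Real.dist_eq]; linarith [hdist x y, abs_nonneg (q x.1 x.2 T - q y.1 y.2 T)]).continuous
  have cq : Continuous (fun x : ℝ × ℝ => q x.1 x.2 T) :=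
    (LipschitzWith.of_dist_le' (K := 4 * Ex) fun x y => by
      rw [Real.dist_eq]; linarith [hdist x y, abs_nonneg (u x.1 x.2 T - u y.1 y.2 T)]).continuous
  have hhit : ∀ c p, 0 < c → (∃ t ∈ Icc 0 T, u c p t ≤ 0) → u c p T ≤ 0 ∧ q c p T ≤ 0 := by
    intro c p hc hz
    obtain ⟨t1, ht1, -, hq1, hl⟩ := vs_hit hb hK hG hGn (hv c p) (by rw [hu0]; exact hc) hz
    obtain ⟨e1, e2⟩ := hl T ⟨ht1.2, le_rfl⟩
    rw [e1, e2]
    exact ⟨mul_nonpos_of_nonpos_of_nonneg hq1 (by linarith [ht1.2]), hq1⟩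
  have hbig : ∀ c p, 0 < c → R < |c| + |p| → u c p T ≤ 0 ∧ q c p T ≤ 0 := by
    intro c p hc hcp
    refine hhit c p hc ?_
    by_contra hcon
    push Not at hcon
    have := hR _ _ (hv c p) hcon
    rw [hu0, hq0] at this
    linarith
  set R1 := |R| + ε + Z + 1 with hR1
  have hRR : R ≤ |R| := le_abs_self R
  have hR0 : 0 ≤ |R| := abs_nonneg R
  have m0 : (0:ℝ) ∈ Icc 0 T := ⟨le_rfl, hT.le⟩
  constructor
  · have c1 : Continuous (fun c => q c 0 T) := 
      cq.comp (by fun_prop : Continuous fun c : ℝ => (c, (0:ℝ)))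
    have a1 : 0 < q ε 0 T := by
      have := n1 _ _ (hv ε 0) (hu0 _ _) (by rw [hq0]; simpa using hZ)
      rwa [hq0] at this
    have a2 : q R1 0 T ≤ 0 := (hbig R1 0 (by linarith) (by
      rw [abs_of_pos (by linarith : 0 < R1)]; simp; linarith)).2
    obtain ⟨c, hc, hcq⟩ := intermediate_value_Icc' (show ε ≤ R1 by linarith) c1.continuousOn 
      (show (0:ℝ) ∈ Icc _ _ from ⟨a2, a1.le⟩)
    simp only at hcq
    refine ⟨_, _, hv c 0, ?_, hq0 _ _, hcq⟩
    by_contra hcon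
    push Not at hcon
    have hc0 : 0 < c := hε.trans_le hc.1
    obtain ⟨t1, ht1, hz, hq1, hl⟩ := vs_hit hb hK hG hGn (hv c 0) (by rw [hu0]; exact hc0) hcon
    have hqz : q c 0 t1 = 0 := by rw [← (hl T ⟨ht1.2, le_rfl⟩).2, hcq]
    have := vs_bwd hb hK hG ht1.1 ((hv c 0).mono le_rfl ht1.2) (vs_zero hGn 0 t1) 0 ⟨le_rfl, ht1.1⟩
    rw [hz, hqz, hu0] at this
    simp at this
    have h3 : |c| ≤ 0 := by linarith [abs_nonneg (q c 0 0)]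
    rw [abs_of_pos hc0] at h3
    linarith
  · obtain ⟨c, hc, p, hp, e1, e2⟩ := rect_zero ε R1 (-R1) Z R1 (by linarith) (by linarith) (by linarith)
      (fun c p => u c p T - c) (fun c p => q c p T - p) (by fun_prop) (by fun_prop)
      (fun c hc => by
        have := (hbig c (-R1) (hε.trans_le hc.1) (by
          rw [abs_neg, abs_of_pos (by linarith : 0 < R1)]; linarith [abs_nonneg c])).1
        linarith [hc.1])
      (fun c hc => by
        have := (hbig c R1 (hε.trans_le hc.1) (by
          rw [abs_of_pos (by linarith : 0 < R1)]; linarith [abs_nonneg c])).1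
        linarith [hc.1])
      (fun p hp => by
        have := (hbig R1 p (by linarith) (by
          rw [abs_of_pos (by linarith : 0 < R1)]; linarith [abs_nonneg p])).1
        linarith)
      (fun p hp h => by
        rcases lt_or_ge p (-Z) with hz | hz
        · have := n3 _ _ (hv ε p) (hu0 _ _) (by rw [hq0]; exact hz)
          linarith
        · have := n1 _ _ (hv ε p) (hu0 _ _) (by rw [hq0, abs_le]; exact ⟨hz, hp.2⟩)
          rw [hq0] at this
          linarith)
      (by
        have := n2 _ _ (hv ε Z) (hu0 _ _) (hq0 _ _)
        linarith)
      (fun p hp h => by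
        have := n4 _ _ (hv ε p) (hu0 _ _) (by rw [hq0]; exact hp.1) (by linarith)
        rw [hq0] at this
        linarith)
    have hc0 : 0 < c := hε.trans_le hc.1
    refine ⟨_, _, hv c p, ?_, by rw [hu0]; linarith, by rw [hq0]; linarith⟩
    by_contra hcon
    push Not at hcon
    have := (hhit c p hc0 hcon).1
    linarith

lemma g_facts (g g' : ℝ → ℝ) (hg0 : g 0 = 0) (hgpos : ∀ s : ℝ, 0 < s → 0 < g s)
    (hgd : ∀ s ∈ Ici (0:ℝ), HasDerivWithinAt g (g' s) (Ici (0:ℝ)) s)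
    (hgdc : ContinuousOn g' (Ici (0:ℝ)))
    (hgd0 : g' 0 = 0)
    (hinf : (0 : EReal) < liminf (fun s : ℝ => ((g' s : ℝ) : EReal)) atTop)
    (hsup : limsup (fun s : ℝ => ((g' s : ℝ) : EReal)) atTop < ⊤) :
    ∃ G : ℝ → ℝ, (∀ s, 0 ≤ s → G s = g s) ∧ (∀ s ≤ 0, G s = 0) ∧ 
      (∃ K, 0 ≤ K ∧ ∀ x y, |G x - G y| ≤ K * |x - y|) ∧
      (∀ η > 0, ∃ r > 0, ∀ x y, x ≤ r → y ≤ r → |G x - G y| ≤ η * |x - y|) ∧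
      (∃ k S, 0 < k ∧ ∀ s, 0 ≤ s → k * (s - S) ≤ G s) := by
  have hmax : ∀ x y : ℝ, |max x 0 - max y 0| ≤ |x - y| := fun x y => abs_max_sub_max_le_abs x y 0
  refine ⟨fun s => g (max s 0), fun s hs => by simp [hs], fun s hs => by simp [hs, hg0], ?_, ?_, ?_⟩
  · obtain ⟨M, hM, -⟩ := EReal.lt_iff_exists_real_btwn.1 hsup
    obtain ⟨m, hm0, hm⟩ := EReal.lt_iff_exists_real_btwn.1 hinf
    have e1 := eventually_lt_of_limsup_lt hM
    have e2 := eventually_lt_of_lt_liminf hm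
    obtain ⟨S, hS⟩ := eventually_atTop.1 (e1.and e2)
    obtain ⟨C, hC⟩ := isCompact_Icc.exists_bound_of_continuousOn (s := Icc 0 S) 
      (hgdc.mono fun x hx => hx.1)
    have hbd : ∀ x ∈ Ici (0:ℝ), ‖g' x‖ ≤ |C| + |M| := by
      intro x hx
      rcases le_total x S with h | h
      · exact (hC x ⟨hx, h⟩).trans (by linarith [le_abs_self C, abs_nonneg M])
      · obtain ⟨a1, a2⟩ := hS x h
        have a1' : g' x < M := by exact_mod_cast a1
        have a2' : 0 < g' x := by exact_mod_cast hm0.trans a2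
        rw [Real.norm_eq_abs, abs_of_pos a2']
        linarith [le_abs_self M, abs_nonneg C]
    refine ⟨|C| + |M|, by positivity, fun x y => ?_⟩
    have := (convex_Ici (0:ℝ)).norm_image_sub_le_of_norm_hasDerivWithin_le hgd hbd 
      (mem_Ici.2 (le_max_right y 0)) (mem_Ici.2 (le_max_right x 0))
    rw [Real.norm_eq_abs, Real.norm_eq_abs] at this
    refine this.trans ?_
    exact mul_le_mul_of_nonneg_left (hmax x y) (by positivity)
  · intro η hη
    have hc := hgdc 0 (show (0:ℝ) ≤ 0 from le_rfl)
    obtain ⟨d, hd, hdd⟩ := Metric.continuousWithinAt_iff.1 hc η hη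
    refine ⟨d / 2, by positivity, fun x y hx hy => ?_⟩
    have hbd : ∀ x ∈ Icc (0:ℝ) (d/2), ‖g' x‖ ≤ η := by
      intro x hx
      have := hdd (show x ∈ Ici (0:ℝ) from hx.1) (by 
        rw [Real.dist_eq, sub_zero, abs_of_nonneg hx.1]; linarith [hx.2])
      rw [hgd0, dist_zero_right] at this
      exact this.le
    have := (convex_Icc (0:ℝ) (d/2)).norm_image_sub_le_of_norm_hasDerivWithin_le 
      (fun x hx => (hgd x hx.1).mono fun z hz => hz.1) hbd 
      (show max y 0 ∈ Icc (0:ℝ) (d/2) from ⟨le_max_right _ _, max_le hy (by positivity)⟩) 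
      (show max x 0 ∈ Icc (0:ℝ) (d/2) from ⟨le_max_right _ _, max_le hx (by positivity)⟩)
    rw [Real.norm_eq_abs, Real.norm_eq_abs] at this
    refine this.trans ?_
    exact mul_le_mul_of_nonneg_left (hmax x y) (by positivity)
  · obtain ⟨m, hm0, hm⟩ := EReal.lt_iff_exists_real_btwn.1 hinf
    have e2 := eventually_lt_of_lt_liminf hm
    obtain ⟨S0, hS0⟩ := eventually_atTop.1 e2
    have hm0' : 0 < m := by exact_mod_cast hm0
    set S := max S0 0 with hS
    have hSn : 0 ≤ S := le_max_right _ _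
    refine ⟨m, S, hm0', fun s hs => ?_⟩
    simp only [max_eq_left hs]
    have gn : ∀ s, 0 ≤ s → 0 ≤ g s := fun s hs => by
      rcases hs.eq_or_lt with h | h
      · rw [← h, hg0]
      · exact (hgpos s h).le
    rcases le_total s S with h | h
    · have := mul_nonpos_of_nonneg_of_nonpos hm0'.le (sub_nonpos.2 h)
      linarith [gn s hs]
    · have hda : ∀ x ∈ interior (Ici S), HasDerivAt g (g' x) x := fun x hx => by
        rw [interior_Ici] at hx
        exact (hgd x (hSn.trans (le_of_lt hx))).hasDerivAt (Ici_mem_nhds (hSn.trans_lt hx))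
      have := (convex_Ici S).mul_sub_le_image_sub_of_le_deriv (f := g) (C := m)
        (fun x hx => ((hgd x (hSn.trans hx)).continuousWithinAt).mono (Ici_subset_Ici.2 hSn))
        (fun x hx => (hda x hx).differentiableAt.differentiableWithinAt)
        (fun x hx => by
          rw [(hda x hx).deriv]
          rw [interior_Ici] at hx
          have := hS0 x ((le_max_left _ _).trans (le_of_lt hx))
          exact le_of_lt (by exact_mod_cast this))
        S (show S ≤ S from le_rfl) s h h
      linarith [gn S hSn]

/-- Theorem: if `a ≥ 0` a.e. on a closed interval `J = [x₁,x₂] ⊆ [0,T]` with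
`∫₀ᵀ a < 0 < ∫_J a`, and `g` is continuously differentiable on `[0,∞)` with
`g(0) = 0`, `g > 0` on `(0,∞)`, `g'(0) = 0` and
`0 < liminf_{s→+∞} g'(s) ≤ limsup_{s→+∞} g'(s) < +∞`, then for every
sufficiently large `ν` the equation `u'' + ν a(x) g(u) = 0` has a positive
Neumann solution and a positive periodic solution. -/
theorem statement_9
    (T : ℝ) (hT : 0 < T)
    (a : ℝ → ℝ) (ha : IntervalIntegrable a volume 0 T)
    (x₁ x₂ : ℝ) (hx1 : 0 ≤ x₁) (hx12 : x₁ ≤ x₂) (hx2 : x₂ ≤ T)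
    (haJ : ∀ᵐ x ∂(volume.restrict (Icc x₁ x₂)), 0 ≤ a x)
    (ha2 : (∫ x in (0:ℝ)..T, a x) < 0)
    (haJpos : 0 < ∫ x in x₁..x₂, a x)
    (g g' : ℝ → ℝ)
    (hg0 : g 0 = 0) (hgpos : ∀ s : ℝ, 0 < s → 0 < g s)
    (hgd : ∀ s ∈ Ici (0:ℝ), HasDerivWithinAt g (g' s) (Ici (0:ℝ)) s)
    (hgdc : ContinuousOn g' (Ici (0:ℝ)))
    (hgd0 : g' 0 = 0)
    (hinf : (0 : EReal) < liminf (fun s : ℝ => ((g' s : ℝ) : EReal)) atTop)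
    (hsup : limsup (fun s : ℝ => ((g' s : ℝ) : EReal)) atTop < ⊤) :
    ∃ νs : ℝ, 0 < νs ∧ ∀ ν : ℝ, νs < ν →
      PosSolNeumann T (fun t => ν * a t) g ∧ PosSolPeriodic T (fun t => ν * a t) g := by
  obtain ⟨G, hGg, hGn, ⟨K, hK, hG⟩, hsmall, k, S, hk, hlow⟩ := 
    g_facts g g' hg0 hgpos hgd hgdc hgd0 hinf hsup
  have hGp : ∀ s, 0 < s → 0 < G s := fun s hs => by rw [hGg s hs.le]; exact hgpos s hs
  have hG0 : ∀ s, 0 ≤ G s := fun s => by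
    rcases le_or_gt s 0 with h | h
    · rw [hGn s h]
    · exact (hGp s h).le
  set a0 : ℝ → ℝ := (Ioc 0 T).indicator a with ha0
  have ha0i : ∀ x y, IntervalIntegrable a0 volume x y := fun x y => by
    have : Integrable a0 volume := by
      rw [ha0, integrable_indicator_iff measurableSet_Ioc]
      exact (intervalIntegrable_iff_integrableOn_Ioc_of_le hT.le).1 ha
    exact this.intervalIntegrable
  have ha0e : ∀ x ∈ Ioc 0 T, a0 x = a x := fun x hx => indicator_of_mem hx a
  have hcong : ∀ s t, 0 ≤ s → s ≤ t → t ≤ T → ∫ x in s..t, a0 x = ∫ x in s..t, a x := by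
    intro s t hs hst ht
    apply intervalIntegral.integral_congr_ae
    filter_upwards with x hx
    rw [uIoc_of_le hst] at hx
    exact ha0e x ⟨hs.trans_lt hx.1, hx.2.trans ht⟩
  have h12 : x₁ < x₂ := by
    rcases hx12.eq_or_lt with h | h
    · rw [h] at haJpos; simp at haJpos
    · exact h
  obtain ⟨δ, hδ, hy, hA⟩ : ∃ δ > 0, x₁ + δ ≤ x₂ - δ ∧ 0 < ∫ x in (x₁ + δ)..(x₂ - δ), a0 x := by
    have hc : Continuous fun δ : ℝ => (∫ x in (0:ℝ)..(x₂ - δ), a0 x) - ∫ x in (0:ℝ)..(x₁ + δ), a0 x := by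
      have := intervalIntegral.continuous_primitive ha0i 0
      exact (this.comp (by fun_prop : Continuous fun δ : ℝ => x₂ - δ)).sub
        (this.comp (by fun_prop : Continuous fun δ : ℝ => x₁ + δ))
    have h0 : 0 < (∫ x in (0:ℝ)..(x₂ - 0), a0 x) - ∫ x in (0:ℝ)..(x₁ + 0), a0 x := by
      rw [sub_zero, add_zero, intervalIntegral.integral_interval_sub_left (ha0i _ _) (ha0i _ _),
        hcong x₁ x₂ hx1 hx12 hx2]
      exact haJpos
    obtain ⟨d, hd, hball⟩ := Metric.eventually_nhds_iff.1 (hc.continuousAt.eventually_const_lt h0)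
    have hm : 0 < min (d / 2) ((x₂ - x₁) / 2) := lt_min (by positivity) (by linarith)
    refine ⟨min (d / 2) ((x₂ - x₁) / 2), hm, ?_, ?_⟩
    · linarith [min_le_right (d / 2) ((x₂ - x₁) / 2)]
    · have := hball (y := min (d / 2) ((x₂ - x₁) / 2)) (by
        rw [Real.dist_eq, sub_zero, abs_of_pos hm]
        linarith [min_le_left (d / 2) ((x₂ - x₁) / 2)])
      rwa [intervalIntegral.integral_interval_sub_left (ha0i _ _) (ha0i _ _)] at this
  set A := ∫ x in (x₁ + δ)..(x₂ - δ), a0 x with hAd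
  have L0 : 0 < x₂ - x₁ := by linarith
  refine ⟨4 * (x₂ - x₁) / δ ^ 2 / (A * k), by positivity, fun ν hν => ?_⟩
  have hν0 : 0 < ν := lt_trans (by positivity) hν
  have hbi : ∀ x y, IntervalIntegrable (fun t => ν * a0 t) volume x y := fun x y => (ha0i x y).const_mul ν
  have hfar := far_bound (T := T) hbi hK hG hGn hG0 hk hlow hx1 hx2 hδ hy (by
      filter_upwards [haJ] with x hx
      exact mul_nonneg hν0.le (by rw [ha0]; exact indicator_apply_nonneg fun _ => hx)) (by
      rw [intervalIntegral.integral_const_mul, mul_assoc]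
      exact ((div_lt_iff₀ (by positivity)).1 hν).le)
  obtain ⟨hN, hP⟩ := core_sol hT hbi hK hG hGn hGp hsmall (by
    rw [intervalIntegral.integral_const_mul, hcong 0 T le_rfl hT.le le_rfl]
    exact mul_neg_of_pos_of_neg hν0 ha2) hfar
  have conv : ∀ u q, VS 0 T (fun t => ν * a0 t) G u q → (∀ t ∈ Icc 0 T, 0 < u t) →
      IsSolOn T (fun t => (ν * a t) * g (u t)) u q := by
    intro u q h hpos
    have m0 : (0:ℝ) ∈ Icc 0 T := ⟨le_rfl, hT.le⟩
    refine ⟨fun x hx => ?_, h.cq.continuousOn, fun x hx => ?_⟩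
    · have h1 : HasDerivAt (fun t => u 0 + ∫ r in (0:ℝ)..t, q r) (q x) x :=
        (h.cq.integral_hasStrictDerivAt 0 x).hasDerivAt.const_add _
      refine h1.hasDerivWithinAt.congr (fun t ht => ?_) ?_
      · linarith [h.eu 0 m0 t ht]
      · linarith [h.eu 0 m0 x hx]
    · have e := h.eq 0 m0 x hx
      have : ∫ t in (0:ℝ)..x, (ν * a t) * g (u t) = ∫ t in (0:ℝ)..x, (ν * a0 t) * G (u t) := by
        apply intervalIntegral.integral_congr_ae
        filter_upwards with t ht
        rw [uIoc_of_le hx.1] at ht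
        rw [ha0e t ⟨ht.1, ht.2.trans hx.2⟩, hGg _ (hpos t ⟨ht.1.le, ht.2.trans hx.2⟩).le]
      rw [this]; linarith
  obtain ⟨u, q, h, hp, e1, e2⟩ := hN
  obtain ⟨v, r, h', hp', e1', e2'⟩ := hP
  exact ⟨⟨u, q, conv u q h hp, hp, e1, e2⟩, ⟨v, r, conv v r h' hp', hp', e1', e2'⟩⟩
end

section
/- Let N ≥ 2 be an integer, 0 < R₁ < R₂, and let Q : [R₁,R₂] → ℝ be continuous satisfying (q1) and (q2). Let g satisfy (g1), be regularly oscillating at zero, and satisfy lim_{s→0⁺} g(s)/s = 0 and lim_{s→+∞} g(s)/s = +∞. Then there exists a C² function w : [R₁,R₂] → ℝ with w(r) > 0 for all r ∈ [R₁,R₂], w''(r) + ((N−1)/r) w'(r) + Q(r) g(w(r)) = 0 for all r ∈ [R₁,R₂], and w'(R₁) = w'(R₂) = 0; that is, the Neumann problem −Δu = Q(‖x‖) g(u) on the annulus {x ∈ ℝᴺ : R₁ < ‖x‖ < R₂} has at least one positive radially symmetric solution u(x) = w(‖x‖). -/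
open MeasureTheory Set Filter

/-- The Neumann problem for the radial equation
`w'' + ((N−1)/r) w' + Q(r) g(w) = 0` on `[R₁,R₂]` has a positive `C²` solution,
i.e. the Neumann problem `−Δu = Q(‖x‖) g(u)` on the annulus has a positive
radially symmetric solution `u(x) = w(‖x‖)`. -/
def RadialNeumannPosSol (N : ℕ) (R₁ R₂ : ℝ) (Q g : ℝ → ℝ) : Prop :=
  ∃ w w' w'' : ℝ → ℝ,
    (∀ r ∈ Icc R₁ R₂, HasDerivWithinAt w (w' r) (Icc R₁ R₂) r) ∧
    (∀ r ∈ Icc R₁ R₂, HasDerivWithinAt w' (w'' r) (Icc R₁ R₂) r) ∧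
    ContinuousOn w'' (Icc R₁ R₂) ∧
    (∀ r ∈ Icc R₁ R₂, 0 < w r) ∧
    (∀ r ∈ Icc R₁ R₂, w'' r + (((N : ℝ) - 1) / r) * w' r + Q r * g (w r) = 0) ∧
    w' R₁ = 0 ∧ w' R₂ = 0

/-- Condition (q1): there are `m ≥ 1` pairwise disjoint closed intervals in
`[R₁,R₂]` on which `Q ≥ 0` with `max Q > 0`, while `Q ≤ 0` outside them. -/
def CondQ1 (R₁ R₂ : ℝ) (Q : ℝ → ℝ) : Prop :=
  ∃ (m : ℕ) (σ τ : Fin m → ℝ), 0 < m ∧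
    (∀ i, R₁ ≤ σ i ∧ σ i ≤ τ i ∧ τ i ≤ R₂) ∧
    (Pairwise fun i j => Disjoint (Icc (σ i) (τ i)) (Icc (σ j) (τ j))) ∧
    (∀ i, ∀ r ∈ Icc (σ i) (τ i), 0 ≤ Q r) ∧
    (∀ i, ∃ r ∈ Icc (σ i) (τ i), 0 < Q r) ∧
    (∀ r ∈ Icc R₁ R₂ \ ⋃ i, Icc (σ i) (τ i), Q r ≤ 0)

/-- Condition (g1): `g : [0,∞) → [0,∞)` is continuous, `g 0 = 0`, `g > 0` on `(0,∞)`. -/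
def CondG1 (g : ℝ → ℝ) : Prop :=
  ContinuousOn g (Ici (0:ℝ)) ∧ (∀ s : ℝ, 0 ≤ s → 0 ≤ g s) ∧ g 0 = 0 ∧
    ∀ s : ℝ, 0 < s → 0 < g s

/-- `g` is regularly oscillating at zero. -/
def RegOscAtZero (g : ℝ → ℝ) : Prop :=
  ∀ ε : ℝ, 0 < ε → ∃ δ > (0:ℝ), ∃ η > (0:ℝ), ∀ s ω : ℝ,
    0 < s → s < δ → |ω - 1| < η → |g (ω * s) / g s - 1| < ε

/-- `liminf_{s → +∞} g(s)/s`, computed in `EReal`. -/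
noncomputable def GrowthLiminf (g : ℝ → ℝ) : EReal :=
  liminf (fun s : ℝ => ((g s / s : ℝ) : EReal)) atTop

/-- `limsup_{s → +∞} g(s)/s`, computed in `EReal`. -/
noncomputable def GrowthLimsup (g : ℝ → ℝ) : EReal :=
  limsup (fun s : ℝ => ((g s / s : ℝ) : EReal)) atTop

namespace RN

lemma lower_help {f f' : ℝ → ℝ} {x y m : ℝ} (hxy : x ≤ y)
    (h : ∀ t ∈ Icc x y, HasDerivAt f (f' t) t) (hn : ∀ t ∈ Ioo x y, m ≤ f' t) :
    m * (y - x) ≤ f y - f x := by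
  rcases hxy.eq_or_lt with rfl | hlt
  · simp
  obtain ⟨c, hc, he⟩ := exists_hasDerivAt_eq_slope f f' hlt
    (fun t ht => (h t ht).continuousAt.continuousWithinAt)
    (fun t ht => h t (Ioo_subset_Icc_self ht))
  have h1 := hn c hc
  have h2 : 0 < y - x := sub_pos.2 hlt
  rw [he, le_div_iff₀ h2] at h1
  exact h1

lemma upper_help {f f' : ℝ → ℝ} {x y m : ℝ} (hxy : x ≤ y)
    (h : ∀ t ∈ Icc x y, HasDerivAt f (f' t) t) (hn : ∀ t ∈ Ioo x y, f' t ≤ m) :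
    f y - f x ≤ m * (y - x) := by
  have := lower_help (f := fun t => - f t) (f' := fun t => - f' t) (m := -m) hxy
    (fun t ht => (h t ht).neg) (fun t ht => neg_le_neg (hn t ht))
  linarith

/-- solution of the first order system on `[a,b]` -/
def Sol (a b : ℝ) (α β G w v : ℝ → ℝ) : Prop :=
  ∀ t ∈ Icc a b, HasDerivAt w (β t * v t) t ∧ HasDerivAt v (-(α t * G (w t))) t

lemma Sol.mono {a b a' b' : ℝ} {α β G w v : ℝ → ℝ} (h : Sol a b α β G w v)
    (ha : a ≤ a') (hb : b' ≤ b) : Sol a' b' α β G w v :=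
  fun t ht => h t ⟨ha.trans ht.1, ht.2.trans hb⟩

lemma Sol.contW {a b : ℝ} {α β G w v : ℝ → ℝ} (h : Sol a b α β G w v) :
    ContinuousOn w (Icc a b) := fun t ht => (h t ht).1.continuousAt.continuousWithinAt

lemma Sol.contV {a b : ℝ} {α β G w v : ℝ → ℝ} (h : Sol a b α β G w v) :
    ContinuousOn v (Icc a b) := fun t ht => (h t ht).2.continuousAt.continuousWithinAt

/-- a priori bound on a positivity interval -/
lemma lemA {σ τ p q q0 β0 β1 : ℝ} {α β : ℝ → ℝ} (h1 : σ < p) (h2 : p < q) (h3 : q < τ)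
    (hq0 : 0 < q0) (hα : ∀ t ∈ Icc σ τ, 0 ≤ α t) (hα' : ∀ t ∈ Icc p q, q0 ≤ α t)
    (hβ0 : 0 < β0) (hβ : ∀ t, β0 ≤ β t ∧ β t ≤ β1) :
    ∃ K > 0, ∀ C : ℝ, ∃ M > 0, ∀ G w v : ℝ → ℝ, (∀ s, 0 ≤ s → 0 ≤ G s) →
      (∀ s, 0 ≤ s → K * s - C ≤ G s) → Sol σ τ α β G w v →
      (∀ t ∈ Icc σ τ, 0 ≤ w t) → ∀ r ∈ Icc σ τ, w r ≤ M := by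
  obtain ⟨d, hd, hd1, hd2⟩ : ∃ d, 0 < d ∧ d ≤ p - σ ∧ d ≤ τ - q :=
    ⟨min (p - σ) (τ - q), lt_min (by linarith) (by linarith), min_le_left _ _, min_le_right _ _⟩
  have hβ1 : 0 < β1 := by linarith [(hβ 0).1, (hβ 0).2]
  set L := τ - σ with hL
  have hLp : 0 < L := by rw [hL]; linarith
  set κ := β0 * d / (β0 * d + β1 * L) with hκ
  have hbd : 0 < β0 * d := by positivity
  have hκp : 0 < κ := by positivity
  have hqp : 0 < q - p := by linarith
  refine ⟨(2 / (β0 * d) + 1) / (q0 * (q - p) * κ), by positivity, fun C => 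
    ⟨q0 * (q - p) * |C| + 1, by positivity, ?_⟩⟩
  set K := (2 / (β0 * d) + 1) / (q0 * (q - p) * κ) with hK
  have hKp : 0 < K := by positivity
  intro G w v hG hGK hs hw
  have hanti : ∀ x y, σ ≤ x → x ≤ y → y ≤ τ → v y ≤ v x := by
    intro x y hx hxy hy
    have := upper_help (f := v) (m := 0) hxy (fun t ht => (hs t ⟨by linarith [ht.1], by linarith [ht.2]⟩).2)
      (fun t ht => by
        have ht' : t ∈ Icc σ τ := ⟨by linarith [ht.1], by linarith [ht.2]⟩
        have := mul_nonneg (hα t ht') (hG _ (hw t ht'))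
        linarith)
    linarith
  obtain ⟨r', hr', hmax⟩ := isCompact_Icc.exists_isMaxOn (nonempty_Icc.2 (by linarith : σ ≤ τ)) hs.contW
  set W := w r' with hW
  have hmax' : ∀ t ∈ Icc σ τ, w t ≤ W := fun t ht => hmax ht
  have hW0 : 0 ≤ W := hw _ hr'
  -- lower bound of the growth, to the left of x when v x ≥ 0
  have hleft : ∀ x ∈ Icc p q, 0 ≤ v x → β0 * d * v x ≤ w x := by
    intro x hx hvx
    have := lower_help (f := w) (f' := fun t => β t * v t) (m := β0 * v x) (x := σ) (y := x) (by linarith [hx.1])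
      (fun t ht => (hs t ⟨ht.1, by linarith [ht.2, hx.2]⟩).1)
      (fun t ht => by
        have h5 := hanti t x ht.1.le ht.2.le (by linarith [hx.2])
        exact mul_le_mul (hβ t).1 h5 hvx (by linarith [(hβ t).1]))
    have h6 := hw σ ⟨le_rfl, by linarith⟩
    have h7 : β0 * v x * d ≤ β0 * v x * (x - σ) :=
      mul_le_mul_of_nonneg_left (by linarith [hx.1]) (by positivity)
    linarith
  have hright : ∀ x ∈ Icc p q, v x ≤ 0 → β0 * d * (-v x) ≤ w x := by
    intro x hx hvx
    have := upper_help (f := w) (f' := fun t => β t * v t) (m := β0 * v x) (x := x) (y := τ) (by linarith [hx.2])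
      (fun t ht => (hs t ⟨by linarith [ht.1, hx.1], ht.2⟩).1)
      (fun t ht => by
        have h5 := hanti x t (by linarith [hx.1]) ht.1.le ht.2.le
        have := mul_le_mul (hβ t).1 (neg_le_neg h5) (by linarith) (by linarith [(hβ t).1])
        linarith)
    have h6 := hw τ ⟨by linarith, le_rfl⟩
    have h7 : β0 * (- v x) * d ≤ β0 * (-v x) * (τ - x) :=
      mul_le_mul_of_nonneg_left (by linarith [hx.2]) (mul_nonneg hβ0.le (by linarith))
    linarith
  have hvp : β0 * d * v p ≤ W := by
    rcases le_total 0 (v p) with h | h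
    · exact (hleft p ⟨le_rfl, h2.le⟩ h).trans (hmax' p ⟨h1.le, by linarith⟩)
    · have := mul_nonneg hbd.le (neg_nonneg.2 h); linarith
  have hvq : β0 * d * (-v q) ≤ W := by
    rcases le_total 0 (v q) with h | h
    · have := mul_nonneg hbd.le h; linarith
    · exact (hright q ⟨h2.le, le_rfl⟩ h).trans (hmax' q ⟨by linarith, h3.le⟩)
  have hlow : ∀ x ∈ Icc p q, κ * W ≤ w x := by
    intro x hx
    have hx1 : σ ≤ x := by linarith [hx.1]
    have hx2 : x ≤ τ := by linarith [hx.2]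
    have hwx : 0 ≤ w x := hw x ⟨hx1, hx2⟩
    rw [hκ, div_mul_eq_mul_div, div_le_iff₀ (by positivity)]
    have hpos : 0 ≤ w x * (β1 * L) := by positivity
    have hbig : W ≤ w x → β0 * d * W ≤ w x * (β0 * d + β1 * L) := by
      intro h
      have := mul_le_mul_of_nonneg_left h hbd.le
      linarith
    rcases le_total 0 (v x) with h | h
    · rcases le_total r' x with hr | hr
      · apply hbig
        have := lower_help (f := w) (f' := fun t => β t * v t) (m := 0) hr
          (fun t ht => (hs t ⟨hr'.1.trans ht.1, ht.2.trans hx2⟩).1)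
          (fun t ht => mul_nonneg (by linarith [(hβ t).1]) (h.trans (hanti t x (hr'.1.trans ht.1.le) ht.2.le hx2)))
        linarith
      · have h5 := upper_help (f := w) (f' := fun t => β t * v t) (m := β1 * v x) hr
          (fun t ht => (hs t ⟨hx1.trans ht.1, ht.2.trans hr'.2⟩).1)
          (fun t ht => by
            have h6 := hanti x t hx1 ht.1.le (ht.2.le.trans hr'.2)
            exact (mul_le_mul_of_nonneg_left h6 (by linarith [(hβ t).1])).trans
              (mul_le_mul_of_nonneg_right (hβ t).2 h))
        have h7 := hleft x hx h
        have h8 : β1 * v x * (r' - x) ≤ β1 * v x * L :=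
          mul_le_mul_of_nonneg_left (by linarith [hr'.2]) (by positivity)
        have h9 := mul_le_mul_of_nonneg_right h7 (by positivity : 0 ≤ β1 * L)
        have h10 := mul_le_mul_of_nonneg_left (h5.trans h8) hbd.le
        nlinarith
    · rcases le_total r' x with hr | hr
      · have h5 := lower_help (f := w) (f' := fun t => β t * v t) (m := β1 * v x) hr
          (fun t ht => (hs t ⟨hr'.1.trans ht.1, ht.2.trans hx2⟩).1)
          (fun t ht => by
            have h6 := hanti t x (hr'.1.trans ht.1.le) ht.2.le hx2
            have h11 := mul_le_mul_of_nonneg_left h6 (by linarith [(hβ t).1] : 0 ≤ β t)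
            have h12 := mul_le_mul_of_nonneg_right (hβ t).2 (neg_nonneg.2 h)
            linarith)
        have h7 := hright x hx h
        have h8 : β1 * (-v x) * (x - r') ≤ β1 * (-v x) * L :=
          mul_le_mul_of_nonneg_left (by linarith [hr'.1]) (mul_nonneg hβ1.le (by linarith))
        have h9 := mul_le_mul_of_nonneg_right h7 (by positivity : 0 ≤ β1 * L)
        have h13 : W - w x ≤ β1 * (-v x) * L := by linarith
        have h10 := mul_le_mul_of_nonneg_left h13 hbd.le
        nlinarith
      · apply hbig
        have := upper_help (f := w) (f' := fun t => β t * v t) (m := 0) hr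
          (fun t ht => (hs t ⟨hx1.trans ht.1, ht.2.trans hr'.2⟩).1)
          (fun t ht => mul_nonpos_of_nonneg_of_nonpos (by linarith [(hβ t).1])
            ((hanti x t hx1 ht.1.le (ht.2.le.trans hr'.2)).trans h))
        linarith
  intro r hr
  refine (hmax' r hr).trans ?_
  by_contra hcon
  push Not at hcon
  have hC : C ≤ |C| := le_abs_self C
  have e1 : K * (q0 * (q - p) * κ) = 2 / (β0 * d) + 1 := by
    rw [hK]; field_simp
  have e2 : 0 < K * (κ * W) - C := by
    have : q0 * (q - p) * C ≤ q0 * (q - p) * |C| := mul_le_mul_of_nonneg_left hC (by positivity)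
    have h5 : q0 * (q - p) * (K * (κ * W) - C) = (K * (q0 * (q - p) * κ)) * W - q0 * (q - p) * C := by ring
    rw [e1] at h5
    have h6 : 0 ≤ 2 / (β0 * d) * W := by positivity
    have h7 : 0 < q0 * (q - p) * (K * (κ * W) - C) := by rw [h5]; nlinarith
    exact pos_of_mul_pos_right h7 (by positivity)
  have e3 := upper_help (f := v) (m := -(q0 * (K * (κ * W) - C))) h2.le
    (fun t ht => (hs t ⟨by linarith [ht.1], by linarith [ht.2]⟩).2)
    (fun t ht => by
      have ht' : t ∈ Icc p q := ⟨ht.1.le, ht.2.le⟩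
      have h5 := hlow t ht'
      have h6 := hGK (w t) (hw t ⟨by linarith [ht.1], by linarith [ht.2]⟩)
      have h7 := mul_le_mul_of_nonneg_left h5 hKp.le
      have h8 := mul_le_mul (hα' t ht') (by linarith : K * (κ * W) - C ≤ G (w t)) e2.le
        (hq0.le.trans (hα' t ht'))
      linarith)
  have e4 : q0 * (q - p) * (K * (κ * W) - C) = (2 / (β0 * d) + 1) * W - q0 * (q - p) * C := by
    rw [← e1]; ring
  have e5 : v p ≤ W / (β0 * d) := by rw [le_div_iff₀ hbd]; linarith
  have e6 : - v q ≤ W / (β0 * d) := by rw [le_div_iff₀ hbd]; linarith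
  have e7 : (2 / (β0 * d) + 1) * W = W / (β0 * d) + W / (β0 * d) + W := by ring
  have : q0 * (q - p) * C ≤ q0 * (q - p) * |C| := mul_le_mul_of_nonneg_left hC (by positivity)
  nlinarith

/-- if `v b ≥ 0` then `w ≥ 0` -/
lemma nonneg_of_end {a b β0 : ℝ} {α β G w v : ℝ → ℝ} (hs : Sol a b α β G w v)
    (hβ0 : 0 < β0) (hβ : ∀ t, β0 ≤ β t) (hG : ∀ s ≤ 0, G s = 0) (ha : 0 ≤ w a) (hb : 0 ≤ v b) :
    ∀ t ∈ Icc a b, 0 ≤ w t := by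
  intro r0 hr0
  by_contra hneg
  push Not at hneg
  -- last point before r0 with w ≥ 0
  have hc1 : IsCompact (Icc a r0 ∩ w ⁻¹' Ici 0) := by
    apply IsCompact.of_isClosed_subset (isCompact_Icc (a := a) (b := r0)) _ inter_subset_left
    exact ContinuousOn.preimage_isClosed_of_isClosed (hs.contW.mono (Icc_subset_Icc_right hr0.2)) isClosed_Icc isClosed_Ici
  obtain ⟨r1, ⟨hr1, hr1w⟩, hr1m⟩ := hc1.exists_isGreatest ⟨a, ⟨le_rfl, hr0.1⟩, ha⟩
  have hr1w' : 0 ≤ w r1 := hr1w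
  have hneg1 : ∀ t, r1 < t → t ≤ r0 → w t < 0 := by
    intro t h1 h2
    by_contra hh
    push Not at hh
    have := hr1m ⟨⟨hr1.1.trans h1.le, h2⟩, hh⟩
    linarith
  have hlt : r1 < r0 := lt_of_le_of_ne hr1.2 (by rintro rfl; linarith)
  have hvc : ∀ x y, a ≤ x → x ≤ y → y ≤ b → (∀ t ∈ Ioo x y, w t ≤ 0) → v y = v x := by
    intro x y hx hxy hy h
    have h1 := upper_help (f := v) (m := 0) hxy (fun t ht => (hs t ⟨hx.trans ht.1, ht.2.trans hy⟩).2)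
      (fun t ht => by rw [hG _ (h t ht)]; simp)
    have h2 := lower_help (f := v) (m := 0) hxy (fun t ht => (hs t ⟨hx.trans ht.1, ht.2.trans hy⟩).2)
      (fun t ht => by rw [hG _ (h t ht)]; simp)
    linarith
  have hv0 : v r0 < 0 := by
    by_contra hh
    push Not at hh
    have := lower_help (f := w) (f' := fun t => β t * v t) (m := 0) hlt.le
      (fun t ht => (hs t ⟨hr1.1.trans ht.1, ht.2.trans hr0.2⟩).1)
      (fun t ht => by
        have := hvc t r0 (hr1.1.trans ht.1.le) ht.2.le hr0.2 (fun u hu => (hneg1 u (ht.1.trans hu.1) hu.2.le).le)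
        rw [← this]
        exact mul_nonneg (by linarith [hβ t]) hh)
    linarith
  -- afterwards
  have hafter : ∀ t ∈ Icc r0 b, w t < 0 := by
    by_contra hh
    push Not at hh
    obtain ⟨t1, ht1, hwt1⟩ := hh
    have hc2 : IsCompact (Icc r0 b ∩ w ⁻¹' Ici 0) := by
      apply IsCompact.of_isClosed_subset (isCompact_Icc (a := r0) (b := b)) _ inter_subset_left
      exact ContinuousOn.preimage_isClosed_of_isClosed (hs.contW.mono (Icc_subset_Icc_left hr0.1)) isClosed_Icc isClosed_Ici
    obtain ⟨r2, ⟨hr2, hr2w⟩, hr2m⟩ := hc2.exists_isLeast ⟨t1, ht1, hwt1⟩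
    have hr2w' : 0 ≤ w r2 := hr2w
    have hneg2 : ∀ t, r0 ≤ t → t < r2 → w t < 0 := by
      intro t h1 h2
      by_contra hh
      push Not at hh
      have := hr2m ⟨⟨h1, h2.le.trans hr2.2⟩, hh⟩
      linarith
    have := upper_help (f := w) (f' := fun t => β t * v t) (m := 0) hr2.1
      (fun t ht => (hs t ⟨hr0.1.trans ht.1, ht.2.trans hr2.2⟩).1)
      (fun t ht => by
        have := hvc r0 t hr0.1 ht.1.le (ht.2.le.trans hr2.2) (fun u hu => (hneg2 u hu.1.le (hu.2.trans ht.2)).le)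
        rw [this]
        exact mul_nonpos_of_nonneg_of_nonpos (by linarith [hβ t]) hv0.le)
    linarith
  have := hvc r0 b hr0.1 hr0.2 le_rfl (fun u hu => (hafter u ⟨hu.1.le, hu.2.le⟩).le)
  linarith

/-- positivity of a nonnegative nontrivial solution -/
lemma pos_of_nonneg {a b A K β1 : ℝ} {α β G w v : ℝ → ℝ} (hs : Sol a b α β G w v)
    (hβ0 : ∀ t, 0 < β t) (hβ1 : ∀ t, β t ≤ β1) (hα : ∀ t, |α t| ≤ A)
    (hG : ∀ s, |G s| ≤ K * |s|) (hK : 0 ≤ K)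
    (ha : 0 < w a) (hb : v b = 0) (hw : ∀ t ∈ Icc a b, 0 ≤ w t) : 
    ∀ t ∈ Icc a b, 0 < w t := by
  intro r0 hr0
  by_contra hneg
  have hw0 : w r0 = 0 := le_antisymm (not_lt.1 hneg) (hw r0 hr0)
  have har : a < r0 := lt_of_le_of_ne hr0.1 (by rintro rfl; linarith)
  have hv0 : v r0 = 0 := by
    rcases hr0.2.eq_or_lt with h | h
    · rw [h, hb]
    · have hm : IsLocalMin w r0 := by
        filter_upwards [Icc_mem_nhds har h] with t ht
        rw [hw0]; exact hw t ht
      have := hm.hasDerivAt_eq_zero (hs r0 hr0).1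
      exact (mul_eq_zero.1 this).resolve_left (hβ0 r0).ne'
  have hA : 0 ≤ A := (abs_nonneg _).trans (hα 0)
  have hβ1p : 0 < β1 := (hβ0 0).trans_le (hβ1 0)
  set Λ := β1 + A * K with hΛ
  have hE : ∀ t ∈ Icc a r0, HasDerivAt (fun t => (w t ^ 2 + v t ^ 2) * Real.exp (Λ * t))
      ((2 * w t * (β t * v t) + 2 * v t * (-(α t * G (w t))) + Λ * (w t ^ 2 + v t ^ 2)) * Real.exp (Λ * t)) t := by
    intro t ht
    obtain ⟨h1, h2⟩ := hs t ⟨ht.1, ht.2.trans hr0.2⟩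
    have h3 : HasDerivAt (fun t => Real.exp (Λ * t)) (Real.exp (Λ * t) * Λ) t := by
      have := ((hasDerivAt_id t).const_mul Λ).exp
      simpa using this
    refine (((h1.fun_pow 2).fun_add (h2.fun_pow 2)).fun_mul h3).congr_deriv ?_
    norm_num
    ring
  have := lower_help (m := 0) har.le hE (fun t ht => by
    apply mul_nonneg _ (Real.exp_pos _).le
    have k1 : |α t * G (w t)| ≤ A * K * |w t| := by
      rw [abs_mul, mul_assoc]
      exact mul_le_mul (hα t) (hG _) (abs_nonneg _) hA
    have k2 : 2 * (|w t| * |v t|) ≤ w t ^ 2 + v t ^ 2 := by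
      have := sq_nonneg (|w t| - |v t|)
      rw [sub_sq, sq_abs, sq_abs] at this
      linarith
    have k3 : |w t * (β t * v t)| ≤ β1 * (|w t| * |v t|) := by
      rw [abs_mul, abs_mul, abs_of_pos (hβ0 t)]
      have := mul_le_mul_of_nonneg_right (hβ1 t) (by positivity : 0 ≤ |w t| * |v t|)
      linarith
    have k4 : |v t * (α t * G (w t))| ≤ A * K * (|w t| * |v t|) := by
      rw [abs_mul]
      have := mul_le_mul_of_nonneg_left k1 (abs_nonneg (v t))
      linarith
    have k5 := neg_abs_le (w t * (β t * v t))
    have k6 := le_abs_self (v t * (α t * G (w t)))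
    have k7 := mul_le_mul_of_nonneg_left k2 (by positivity : 0 ≤ Λ)
    rw [hΛ] at *
    nlinarith)
  simp only [hw0, hv0] at this
  have h5 : 0 < (w a ^ 2 + v a ^ 2) * Real.exp (Λ * a) := by positivity
  norm_num at this
  linarith

lemma go_right {a b β0 x s : ℝ} {α β G w v : ℝ → ℝ} (hs : Sol a b α β G w v)
    (hβ0 : 0 < β0) (hβ : ∀ t, β0 ≤ β t) (hG : ∀ s, 0 ≤ s → 0 ≤ G s) (hw : ∀ t ∈ Icc a b, 0 ≤ w t)
    (hx : a ≤ x) (hxs : x ≤ s) (hsb : s ≤ b) (hα : ∀ t ∈ Ioo x s, α t ≤ 0) (hv : 0 ≤ v x) :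
    w x ≤ w s := by
  have h1 : ∀ y ∈ Ioo x s, 0 ≤ v y := by
    intro y hy
    have := lower_help (f := v) (m := 0) hy.1.le
      (fun t ht => (hs t ⟨by linarith [ht.1], by linarith [ht.2, hy.2]⟩).2)
      (fun t ht => by
        have := mul_nonpos_of_nonpos_of_nonneg (hα t ⟨ht.1, ht.2.trans hy.2⟩)
          (hG _ (hw t ⟨by linarith [ht.1], by linarith [ht.2, hy.2]⟩))
        linarith)
    linarith
  have := lower_help (f := w) (f' := fun t => β t * v t) (m := 0) hxs
    (fun t ht => (hs t ⟨by linarith [ht.1], by linarith [ht.2]⟩).1)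
    (fun t ht => mul_nonneg (by linarith [hβ t]) (h1 t ht))
  linarith

lemma go_left {a b β0 x s : ℝ} {α β G w v : ℝ → ℝ} (hs : Sol a b α β G w v)
    (hβ0 : 0 < β0) (hβ : ∀ t, β0 ≤ β t) (hG : ∀ s, 0 ≤ s → 0 ≤ G s) (hw : ∀ t ∈ Icc a b, 0 ≤ w t)
    (hx : x ≤ b) (hxs : s ≤ x) (hsb : a ≤ s) (hα : ∀ t ∈ Ioo s x, α t ≤ 0) (hv : v x ≤ 0) :
    w x ≤ w s := by
  have h1 : ∀ y ∈ Ioo s x, v y ≤ 0 := by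
    intro y hy
    have := lower_help (f := v) (m := 0) hy.2.le
      (fun t ht => (hs t ⟨by linarith [ht.1, hy.1], by linarith [ht.2]⟩).2)
      (fun t ht => by
        have := mul_nonpos_of_nonpos_of_nonneg (hα t ⟨hy.1.trans ht.1, ht.2⟩)
          (hG _ (hw t ⟨by linarith [ht.1, hy.1], by linarith [ht.2]⟩))
        linarith)
    linarith
  have := upper_help (f := w) (f' := fun t => β t * v t) (m := 0) hxs
    (fun t ht => (hs t ⟨by linarith [ht.1], by linarith [ht.2]⟩).1)
    (fun t ht => mul_nonpos_of_nonneg_of_nonpos (by linarith [hβ t]) (h1 t ht))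
  linarith

lemma first_point {a b : ℝ} {S : Set ℝ} (hS : IsClosed S) {x y : ℝ} (hy : y ∈ S) (hxy : x ≤ y)
    (hax : a ≤ x) (hyb : y ≤ b) {α : ℝ → ℝ} (hα : ∀ t ∈ Icc a b \ S, α t ≤ 0) :
    ∃ s ∈ S, x ≤ s ∧ s ≤ y ∧ ∀ t ∈ Ioo x s, α t ≤ 0 := by
  have hc : IsCompact (Icc x y ∩ S) := isCompact_Icc.inter_right hS
  obtain ⟨s, ⟨h1, h2⟩, h3⟩ := hc.exists_isLeast ⟨y, ⟨hxy, le_rfl⟩, hy⟩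
  refine ⟨s, h2, h1.1, h1.2, fun t ht => hα t ⟨⟨hax.trans ht.1.le, ht.2.le.trans (h1.2.trans hyb)⟩, fun h => ?_⟩⟩
  have := h3 ⟨⟨ht.1.le, ht.2.le.trans h1.2⟩, h⟩
  linarith [ht.2]

lemma last_point {a b : ℝ} {S : Set ℝ} (hS : IsClosed S) {x y : ℝ} (hy : y ∈ S) (hxy : y ≤ x)
    (hax : x ≤ b) (hyb : a ≤ y) {α : ℝ → ℝ} (hα : ∀ t ∈ Icc a b \ S, α t ≤ 0) :
    ∃ s ∈ S, s ≤ x ∧ y ≤ s ∧ ∀ t ∈ Ioo s x, α t ≤ 0 := by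
  have hc : IsCompact (Icc y x ∩ S) := isCompact_Icc.inter_right hS
  obtain ⟨s, ⟨h1, h2⟩, h3⟩ := hc.exists_isGreatest ⟨y, ⟨le_rfl, hxy⟩, hy⟩
  refine ⟨s, h2, h1.2, h1.1, fun t ht => hα t ⟨⟨hyb.trans (h1.1.trans ht.1.le), ht.2.le.trans hax⟩, fun h => ?_⟩⟩
  have := h3 ⟨⟨h1.1.trans ht.1.le, ht.2.le⟩, h⟩
  linarith [ht.1]

lemma bound_all {a b β0 M : ℝ} {α β G w v : ℝ → ℝ} (hs : Sol a b α β G w v) (hab : a < b)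
    (hβ0 : 0 < β0) (hβ : ∀ t, β0 ≤ β t) (hG : ∀ s, 0 ≤ s → 0 ≤ G s) (hw : ∀ t ∈ Icc a b, 0 ≤ w t)
    {S : Set ℝ} (hS : IsClosed S) (hSab : S ⊆ Icc a b) (hne : S.Nonempty)
    (hα : ∀ t ∈ Icc a b \ S, α t ≤ 0) (hva : v a = 0) (hvb : v b = 0) (hM : ∀ t ∈ S, w t ≤ M) :
    ∀ t ∈ Icc a b, w t ≤ M := by
  obtain ⟨r, hr, hmax⟩ := isCompact_Icc.exists_isMaxOn (nonempty_Icc.2 hab.le) hs.contW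
  have hv : v r = 0 := by
    rcases hr.1.eq_or_lt with h | h1
    · rw [← h, hva]
    rcases hr.2.eq_or_lt with h | h2
    · rw [h, hvb]
    have hm : IsLocalMax w r := hmax.isLocalMax (Icc_mem_nhds h1 h2)
    have := hm.hasDerivAt_eq_zero (hs r hr).1
    exact (mul_eq_zero.1 this).resolve_left (by linarith [hβ r])
  intro t ht
  refine le_trans (hmax ht) ?_
  obtain ⟨y, hy⟩ := hne
  rcases le_total r y with h | h
  · obtain ⟨s, h1, h2, h3, h4⟩ := first_point hS hy h hr.1 (hSab hy).2 hα
    exact (go_right hs hβ0 hβ hG hw hr.1 h2 (hSab h1).2 h4 hv.ge).trans (hM s h1)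
  · obtain ⟨s, h1, h2, h3, h4⟩ := last_point hS hy h hr.2 (hSab hy).1 hα
    exact (go_left hs hβ0 hβ hG hw hr.2 h2 (hSab h1).1 h4 hv.le).trans (hM s h1)

lemma large_start {a b β0 M : ℝ} {α β G w v : ℝ → ℝ} (hs : Sol a b α β G w v) (hab : a < b)
    (hβ0 : 0 < β0) (hβ : ∀ t, β0 ≤ β t) (hG : ∀ s, 0 ≤ s → 0 ≤ G s) (hG0 : ∀ s ≤ 0, G s = 0)
    {S : Set ℝ} (hS : IsClosed S) (hSab : S ⊆ Icc a b) (hne : S.Nonempty)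
    (hα : ∀ t ∈ Icc a b \ S, α t ≤ 0) (hva : v a = 0)
    (hM : (∀ t ∈ Icc a b, 0 ≤ w t) → ∀ t ∈ S, w t ≤ M) (hM0 : 0 < M) (hwa : M < w a) : v b < 0 := by
  by_contra h
  push Not at h
  have hw := nonneg_of_end hs hβ0 hβ hG0 (hM0.trans hwa).le h
  obtain ⟨y, hy⟩ := hne
  obtain ⟨s, h1, h2, h3, h4⟩ := first_point hS hy (hSab hy).1 le_rfl (hSab hy).2 hα
  have h5 := go_right hs hβ0 hβ hG hw le_rfl h2 (hSab h1).2 h4 hva.ge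
  have h6 := hM hw s h1
  linarith

lemma small_start {a b A β1 M : ℝ} {α β g : ℝ → ℝ} (hab : a < b)
    (hβ0 : ∀ t, 0 < β t) (hβ1 : ∀ t, β t ≤ β1) (hα : ∀ t, |α t| ≤ A) (hαc : Continuous α)
    (hI : ∫ t in a..b, α t < 0) (hM : 0 < M) (hg : ∀ s, 0 < s → 0 < g s)
    (hreg : ∀ ε : ℝ, 0 < ε → ∃ δ > (0:ℝ), ∃ η > (0:ℝ), ∀ s ω : ℝ,
      0 < s → s < δ → |ω - 1| < η → |g (ω * s) / g s - 1| < ε)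
    (hg0 : Tendsto (fun s => g s / s) (nhdsWithin 0 (Ioi 0)) (nhds 0)) :
    ∃ c > 0, c < M ∧ ∀ G w v : ℝ → ℝ, (∀ s, 0 < s → s ≤ M → G s = g s) → Sol a b α β G w v →
      w a = c → v a = 0 → 0 < v b := by
  have hA : 0 ≤ A := (abs_nonneg _).trans (hα 0)
  have hβ1p : 0 < β1 := (hβ0 0).trans_le (hβ1 0)
  have hT : 0 < b - a := by linarith
  set I := -∫ t in a..b, α t with hIdef
  have hIp : 0 < I := by linarith
  set ε := I / (2 * (A * (b - a) + 1)) with hε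
  have hεp : 0 < ε := by positivity
  have hε2 : A * ε * (b - a) < I := by
    rw [hε, mul_div_assoc', div_mul_eq_mul_div, div_lt_iff₀ (by positivity)]
    nlinarith [mul_nonneg hA hT.le]
  obtain ⟨δ, hδ, η, hη, H⟩ := hreg ε hεp
  set e := min η 1 / 2 with he
  have hep : 0 < e := by positivity
  have he1 : e < η := by have := min_le_left η 1; rw [he]; linarith
  have he2 : e ≤ 1 / 2 := by have := min_le_right η 1; rw [he]; linarith
  set l := e / (4 * β1 * (A + 1) * (b - a) * (b - a)) with hl
  have hlp : 0 < l := by positivity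
  obtain ⟨d, hd, hdl⟩ : ∃ d > 0, ∀ s, 0 < s → s < d → g s ≤ l * s := by
    have h1 := hg0.eventually (gt_mem_nhds hlp)
    rw [eventually_nhdsWithin_iff, Metric.eventually_nhds_iff] at h1
    obtain ⟨d, hd, h2⟩ := h1
    refine ⟨d, hd, fun s hs hsd => ?_⟩
    have := h2 (y := s) (by rw [Real.dist_eq, sub_zero, abs_of_pos hs]; exact hsd) hs
    rw [div_lt_iff₀ hs] at this
    exact this.le
  set c := min (min (δ / 2) (d / 3)) (M / 2) with hc
  have hcp : 0 < c := by positivity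
  have hc1 : c < δ := by
    have h1 := (min_le_left (min (δ / 2) (d / 3)) (M / 2)).trans (min_le_left _ _)
    linarith
  have hc2 : 2 * c < d := by
    have h1 := (min_le_left (min (δ / 2) (d / 3)) (M / 2)).trans (min_le_right _ _)
    linarith
  have hc3 : 2 * c ≤ M := by
    have h1 := min_le_right (min (δ / 2) (d / 3)) (M / 2)
    linarith
  refine ⟨c, hcp, by linarith, fun G w v hG hs hwa hva => ?_⟩
  have hec : 0 < e * c := by positivity
  have key : ∀ t, |w t - c| ≤ e * c → 0 < w t ∧ w t ≤ 2 * c := by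
    intro t ht
    rw [abs_le] at ht
    have : e * c ≤ 1 / 2 * c := mul_le_mul_of_nonneg_right he2 hcp.le
    constructor <;> linarith
  have hGb : ∀ t, |w t - c| ≤ e * c → |G (w t)| ≤ l * (2 * c) := by
    intro t ht
    obtain ⟨h1, h2⟩ := key t ht
    rw [hG _ h1 (h2.trans hc3), abs_of_pos (hg _ h1)]
    exact (hdl _ h1 (h2.trans_lt hc2)).trans (mul_le_mul_of_nonneg_left h2 hlp.le)
  -- bootstrap
  have hclose : ∀ t ∈ Icc a b, |w t - c| < e * c := by
    by_contra hh
    push Not at hh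
    obtain ⟨t1, ht1, ht1'⟩ := hh
    have hc2 : IsCompact (Icc a b ∩ (fun t => |w t - c|) ⁻¹' Ici (e * c)) := by
      apply IsCompact.of_isClosed_subset (isCompact_Icc (a := a) (b := b)) _ inter_subset_left
      exact ContinuousOn.preimage_isClosed_of_isClosed ((hs.contW.sub continuousOn_const).abs) isClosed_Icc isClosed_Ici
    obtain ⟨r, ⟨hr, hrw⟩, hrm⟩ := hc2.exists_isLeast ⟨t1, ht1, ht1'⟩
    have hrw' : e * c ≤ |w r - c| := hrw
    have hbef : ∀ t ∈ Ico a r, |w t - c| ≤ e * c := by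
      intro t ht
      by_contra hh
      push Not at hh
      have := hrm ⟨⟨ht.1, ht.2.le.trans hr.2⟩, hh.le⟩
      linarith [ht.2]
    have hv : ∀ t ∈ Icc a r, ‖v t - v a‖ ≤ A * (l * (2 * c)) * (t - a) :=
      norm_image_sub_le_of_norm_deriv_le_segment' (f' := fun t => -(α t * G (w t)))
        (fun t ht => ((hs t ⟨ht.1, ht.2.trans hr.2⟩).2).hasDerivWithinAt)
        (fun t ht => by
          rw [norm_neg, Real.norm_eq_abs, abs_mul]
          exact mul_le_mul (hα t) (hGb t (hbef t ht)) (abs_nonneg _) hA)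
    have hw : ∀ t ∈ Icc a r, ‖w t - w a‖ ≤ β1 * (A * (l * (2 * c)) * (b - a)) * (t - a) :=
      norm_image_sub_le_of_norm_deriv_le_segment' (f' := fun t => β t * v t)
        (fun t ht => ((hs t ⟨ht.1, ht.2.trans hr.2⟩).1).hasDerivWithinAt)
        (fun t ht => by
          rw [norm_mul]
          have h1 := hv t ⟨ht.1, ht.2.le⟩
          rw [hva, sub_zero] at h1
          have h2 : A * (l * (2 * c)) * (t - a) ≤ A * (l * (2 * c)) * (b - a) :=
            mul_le_mul_of_nonneg_left (by linarith [ht.2, hr.2]) (by positivity)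
          refine mul_le_mul ?_ (h1.trans h2) (norm_nonneg _) hβ1p.le
          rw [Real.norm_eq_abs, abs_of_pos (hβ0 t)]; exact hβ1 t)
    have h1 := hw r ⟨hr.1, le_rfl⟩
    rw [hwa, Real.norm_eq_abs] at h1
    have h2 : β1 * (A * (l * (2 * c)) * (b - a)) * (r - a) ≤ β1 * ((A + 1) * (l * (2 * c)) * (b - a)) * (b - a) := by
      have := hr.1
      have := hr.2
      gcongr <;> linarith
    have h3 : β1 * ((A + 1) * (l * (2 * c)) * (b - a)) * (b - a) = e * c / 2 := by
      rw [hl]; field_simp; ring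
    linarith
  have hP : ∀ t, HasDerivAt (fun t => ∫ u in a..t, α u) (α t) t := fun t =>
    intervalIntegral.integral_hasDerivAt_right (hαc.intervalIntegrable _ _)
      hαc.aestronglyMeasurable.stronglyMeasurableAtFilter hαc.continuousAt
  have hfin : ∀ t ∈ Icc a b, ‖(v t + g c * ∫ u in a..t, α u) - (v a + g c * ∫ u in a..a, α u)‖
      ≤ A * (ε * g c) * (t - a) :=
    norm_image_sub_le_of_norm_deriv_le_segment' (f := fun t => v t + g c * ∫ u in a..t, α u)
      (f' := fun t => -(α t * G (w t)) + g c * α t)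
      (fun t ht => (((hs t ht).2).add ((hP t).const_mul (g c))).hasDerivWithinAt)
      (fun t ht => by
        have ht' := hclose t ⟨ht.1, ht.2.le⟩
        obtain ⟨h1, h2⟩ := key t ht'.le
        have e1 : -(α t * G (w t)) + g c * α t = α t * (g c - G (w t)) := by ring
        rw [e1, norm_mul]
        refine mul_le_mul (hα t) ?_ (norm_nonneg _) hA
        rw [hG _ h1 (h2.trans hc3)]
        have h3 := H c (w t / c) hcp hc1 (by
          rw [div_sub_one hcp.ne', abs_div, abs_of_pos hcp, div_lt_iff₀ hcp]
          exact ht'.trans (mul_lt_mul_of_pos_right he1 hcp))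
        rw [div_mul_cancel₀ _ hcp.ne', div_sub_one (hg c hcp).ne', abs_div, abs_of_pos (hg c hcp),
          div_lt_iff₀ (hg c hcp)] at h3
        rw [Real.norm_eq_abs, abs_sub_comm]
        exact h3.le)
  have h1 := hfin b ⟨hab.le, le_rfl⟩
  simp only [hva, intervalIntegral.integral_same, mul_zero, add_zero, sub_zero] at h1
  rw [Real.norm_eq_abs, abs_le] at h1
  have h2 := h1.1
  have h3 : A * (ε * g c) * (b - a) < I * g c := by
    have := mul_lt_mul_of_pos_right hε2 (hg c hcp)
    linarith
  have h4 : (∫ u in a..b, α u) = -I := by rw [hIdef]; ring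
  rw [h4] at h2
  linarith

/-- delayed approximations -/
noncomputable def yy (a δ : ℝ) (α β G : ℝ → ℝ) : ℕ → ℝ → ℝ → ℝ
  | 0, c, _ => c
  | k + 1, c, t => c - ∫ s in a..t, β s * ∫ τ in a..s, α τ * G (yy a δ α β G k c (max a (τ - δ)))

lemma yy_cont {a δ : ℝ} {α β G : ℝ → ℝ} (hα : Continuous α) (hβ : Continuous β) (hG : Continuous G)
    (k : ℕ) : Continuous (fun p : ℝ × ℝ => yy a δ α β G k p.1 p.2) := by
  induction k with
  | zero => simp only [yy]; exact continuous_fst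
  | succ k ih =>
    simp only [yy]
    have h1 : Continuous (fun p : ℝ × ℝ => ∫ τ in a..p.2, α τ * G (yy a δ α β G k p.1 (max a (τ - δ)))) := by
      apply intervalIntegral.continuous_parametric_intervalIntegral_of_continuous _ continuous_snd
      simp only [Function.uncurry_def]
      have h2 : Continuous (fun q : (ℝ × ℝ) × ℝ => yy a δ α β G k q.1.1 (max a (q.2 - δ))) :=
        ih.comp (f := fun q : (ℝ × ℝ) × ℝ => (q.1.1, max a (q.2 - δ))) (by fun_prop)
      exact (hα.comp continuous_snd).mul (hG.comp h2)
    refine continuous_fst.sub ?_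
    apply intervalIntegral.continuous_parametric_intervalIntegral_of_continuous _ continuous_snd
    simp only [Function.uncurry_def]
    have h3 := h1.comp (f := fun q : (ℝ × ℝ) × ℝ => (q.1.1, q.2)) (by fun_prop)
    exact (hβ.comp continuous_snd).mul h3

lemma yy_fix {a δ : ℝ} {α β G : ℝ → ℝ} (hδ : 0 < δ) (c : ℝ) (k : ℕ) :
    ∀ t, a ≤ t → t ≤ a + k * δ → yy a δ α β G (k + 1) c t = yy a δ α β G k c t := by
  induction k with
  | zero =>
    intro t h1 h2
    have : t = a := le_antisymm (by simpa using h2) h1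
    subst this
    simp [yy]
  | succ k ih =>
    intro t h1 h2
    rw [yy.eq_def _ _ _ _ _ (k + 1 + 1), yy.eq_def _ _ _ _ _ (k + 1)]
    simp only
    congr 1
    apply intervalIntegral.integral_congr
    intro s hs
    rw [uIcc_of_le h1] at hs
    simp only
    congr 1
    apply intervalIntegral.integral_congr
    intro τ hτ
    rw [uIcc_of_le hs.1] at hτ
    simp only
    rw [ih _ (le_max_left _ _)]
    apply max_le
    · have : 0 ≤ (k : ℝ) * δ := by positivity
      linarith
    · push_cast at h2
      linarith [hτ.2, hs.2]

lemma exp_bound {a t D l : ℝ} {f : ℝ → ℝ} (hl : 0 < l) (hat : a ≤ t)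
    (h : ∀ s ∈ Icc a t, |f s| ≤ D * Real.exp (l * (s - a))) :
    |∫ s in a..t, f s| ≤ D / l * (Real.exp (l * (t - a)) - 1) := by
  have h1 : ‖∫ s in a..t, f s‖ ≤ ∫ s in a..t, D * Real.exp (l * (s - a)) := by
    apply intervalIntegral.norm_integral_le_of_norm_le hat
    · exact Eventually.of_forall fun s hs => h s ⟨hs.1.le, hs.2⟩
    · exact Continuous.intervalIntegrable (by fun_prop) _ _
  have h2 : ∫ s in a..t, D * Real.exp (l * (s - a)) = D / l * Real.exp (l * (t - a)) - D / l * Real.exp (l * (a - a)) := by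
    apply intervalIntegral.integral_eq_sub_of_hasDerivAt
    · intro s _
      have := ((((hasDerivAt_id s).sub_const a).const_mul l).exp).const_mul (D / l)
      refine this.congr_deriv ?_
      simp only [id]
      field_simp
    · exact Continuous.intervalIntegrable (by fun_prop) _ _
  rw [h2, Real.norm_eq_abs] at h1
  simp only [sub_self, mul_zero, Real.exp_zero] at h1
  linarith

lemma yy_bound {a δ A K β1 l : ℝ} {α β G : ℝ → ℝ} (hδ : 0 < δ)
    (hβ0 : ∀ t, 0 < β t) (hβ1 : ∀ t, β t ≤ β1) (hα : ∀ t, |α t| ≤ A)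
    (hK : 0 ≤ K) (hG : ∀ s, |G s| ≤ K * |s|) (hl : 0 < l) (hl2 : β1 * (A * K) ≤ l * l) (c : ℝ) (k : ℕ) :
    ∀ t, a ≤ t → |yy a δ α β G k c t| ≤ |c| * Real.exp (l * (t - a)) := by
  have hA : 0 ≤ A := (abs_nonneg _).trans (hα 0)
  have hβ1p : 0 < β1 := (hβ0 0).trans_le (hβ1 0)
  induction k with
  | zero =>
    intro t ht
    simp only [yy]
    have : 1 ≤ Real.exp (l * (t - a)) := Real.one_le_exp (mul_nonneg hl.le (by linarith))
    nlinarith [abs_nonneg c]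
  | succ k ih =>
    intro t ht
    simp only [yy]
    have h1 : ∀ s, a ≤ s → |∫ τ in a..s, α τ * G (yy a δ α β G k c (max a (τ - δ)))|
        ≤ A * K * |c| / l * Real.exp (l * (s - a)) := by
      intro s hs
      have := exp_bound (f := fun τ => α τ * G (yy a δ α β G k c (max a (τ - δ)))) (D := A * K * |c|) hl hs (by
        intro τ hτ
        have h2 := ih (max a (τ - δ)) (le_max_left _ _)
        have h3 : Real.exp (l * (max a (τ - δ) - a)) ≤ Real.exp (l * (τ - a)) := by
          apply Real.exp_le_exp.2
          apply mul_le_mul_of_nonneg_left _ hl.le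
          have : max a (τ - δ) ≤ τ := max_le hτ.1 (by linarith)
          linarith
        have h4 := h2.trans (mul_le_mul_of_nonneg_left h3 (abs_nonneg c))
        have h5 := (hG (yy a δ α β G k c (max a (τ - δ)))).trans (mul_le_mul_of_nonneg_left h4 hK)
        rw [abs_mul]
        have := mul_le_mul (hα τ) h5 (abs_nonneg _) hA
        linarith)
      have h6 : 0 ≤ A * K * |c| / l := by positivity
      linarith
    have h2 := exp_bound (f := fun s => β s * ∫ τ in a..s, α τ * G (yy a δ α β G k c (max a (τ - δ))))
      (D := β1 * (A * K * |c| / l)) hl ht (by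
        intro s hs
        rw [abs_mul, abs_of_pos (hβ0 s), mul_assoc]
        exact mul_le_mul (hβ1 s) (h1 s hs.1) (abs_nonneg _) hβ1p.le)
    have h3 : 1 ≤ Real.exp (l * (t - a)) := Real.one_le_exp (mul_nonneg hl.le (by linarith))
    have h4 : β1 * (A * K * |c| / l) / l ≤ |c| := by
      rw [div_le_iff₀ hl, mul_div_assoc', div_le_iff₀ hl]
      nlinarith [mul_le_mul_of_nonneg_right hl2 (abs_nonneg c)]
    have h5 := h2.trans (mul_le_mul_of_nonneg_right h4 (by linarith))
    have h6 := abs_sub c (∫ s in a..t, β s * ∫ τ in a..s, α τ * G (yy a δ α β G k c (max a (τ - δ))))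
    linarith

lemma delay_exists {a b δ A K β1 l : ℝ} {α β G : ℝ → ℝ} (hδ : 0 < δ)
    (hαc : Continuous α) (hβc : Continuous β) (hGc : Continuous G)
    (hβ0 : ∀ t, 0 < β t) (hβ1 : ∀ t, β t ≤ β1) (hα : ∀ t, |α t| ≤ A)
    (hK : 0 ≤ K) (hG : ∀ s, |G s| ≤ K * |s|) (hl : 0 < l) (hl2 : β1 * (A * K) ≤ l * l) :
    ∃ y : ℝ → ℝ → ℝ, Continuous (fun p : ℝ × ℝ => y p.1 p.2) ∧
      (∀ c, ∀ t ∈ Icc a b, y c t = c - ∫ s in a..t, β s * ∫ τ in a..s, α τ * G (y c (max a (τ - δ)))) ∧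
      ∀ c t, a ≤ t → |y c t| ≤ |c| * Real.exp (l * (t - a)) := by
  obtain ⟨k, hk⟩ := exists_nat_ge ((b - a) / δ)
  rw [div_le_iff₀ hδ] at hk
  refine ⟨yy a δ α β G k, yy_cont hαc hβc hGc k, fun c t ht => ?_, fun c => yy_bound hδ hβ0 hβ1 hα hK hG hl hl2 c k⟩
  rw [← yy_fix hδ c k t ht.1 (by linarith [ht.2])]
  rfl

open Topology in
lemma compactness {a b A K β1 B : ℝ} {α β G : ℝ → ℝ} (hab : a < b)
    (hαc : Continuous α) (hβc : Continuous β) (hGc : Continuous G)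
    (hβ0 : ∀ t, 0 < β t) (hβ1 : ∀ t, β t ≤ β1) (hα : ∀ t, |α t| ≤ A)
    (hK : 0 ≤ K) (hG : ∀ s, |G s| ≤ K * |s|) {δ c : ℕ → ℝ} {y : ℕ → ℝ → ℝ}
    (hδ : ∀ n, 0 < δ n) (hδ0 : Tendsto δ atTop (𝓝 0)) (hyc : ∀ n, Continuous (y n))
    (hy : ∀ n, ∀ t ∈ Icc a b, y n t = c n - ∫ s in a..t, β s * ∫ τ in a..s, α τ * G (y n (max a (τ - δ n))))
    (hB0 : 0 ≤ B) (hB : ∀ n, ∀ t ∈ Icc a b, |y n t| ≤ B) :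
    ∃ φ : ℕ → ℕ, StrictMono φ ∧ ∃ w v : ℝ → ℝ, Sol a b α β G w v ∧ v a = 0 ∧
      Tendsto (fun n => c (φ n)) atTop (𝓝 (w a)) ∧
      Tendsto (fun n => -∫ τ in a..b, α τ * G (y (φ n) (max a (τ - δ (φ n))))) atTop (𝓝 (v b)) := by
  have hA : 0 ≤ A := (abs_nonneg _).trans (hα 0)
  have hβ1p : 0 < β1 := (hβ0 0).trans_le (hβ1 0)
  have hmem : ∀ n, ∀ τ ∈ Icc a b, max a (τ - δ n) ∈ Icc a b := fun n τ hτ =>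
    ⟨le_max_left _ _, max_le hab.le (by linarith [hτ.2, hδ n])⟩
  set V : ℕ → ℝ → ℝ := fun n s => ∫ τ in a..s, α τ * G (y n (max a (τ - δ n))) with hV
  have hinc : ∀ n, Continuous (fun τ => α τ * G (y n (max a (τ - δ n)))) := fun n =>
    hαc.mul (hGc.comp ((hyc n).comp (by fun_prop)))
  have hVc : ∀ n, Continuous (V n) := fun n =>
    intervalIntegral.continuous_primitive (fun _ _ => (hinc n).intervalIntegrable _ _) a
  have hib : ∀ n, ∀ τ ∈ Icc a b, ‖α τ * G (y n (max a (τ - δ n)))‖ ≤ A * (K * B) := by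
    intro n τ hτ
    rw [norm_mul]
    refine mul_le_mul (hα τ) ?_ (norm_nonneg _) hA
    exact (hG _).trans (mul_le_mul_of_nonneg_left (hB n _ (hmem n τ hτ)) hK)
  have hVb : ∀ n, ∀ s ∈ Icc a b, ‖V n s‖ ≤ A * (K * B) * (b - a) := by
    intro n s hs
    have h1 := intervalIntegral.norm_integral_le_of_norm_le_const (a := a) (b := s) (C := A * (K * B))
      (f := fun τ => α τ * G (y n (max a (τ - δ n)))) (by
        intro τ hτ
        rw [uIoc_of_le hs.1] at hτ
        exact hib n τ ⟨hτ.1.le, hτ.2.trans hs.2⟩)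
    refine h1.trans ?_
    rw [abs_of_nonneg (by linarith [hs.1])]
    exact mul_le_mul_of_nonneg_left (by linarith [hs.2]) (by positivity)
  have hβV : ∀ n, ∀ s ∈ Icc a b, ‖β s * V n s‖ ≤ β1 * (A * (K * B) * (b - a)) := by
    intro n s hs
    rw [norm_mul]
    refine mul_le_mul ?_ (hVb n s hs) (norm_nonneg _) hβ1p.le
    rw [Real.norm_eq_abs, abs_of_pos (hβ0 s)]; exact hβ1 s
  have hT : 0 < b - a := by linarith
  set Λ : NNReal := ⟨β1 * (A * (K * B) * (b - a)), by positivity⟩ with hΛ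
  let f : ℕ → BoundedContinuousFunction (Icc a b) ℝ := fun n =>
    BoundedContinuousFunction.mkOfCompact ⟨fun x => y n x, (hyc n).comp continuous_subtype_val⟩
  have hf : ∀ n x, f n x = y n x := fun n x => rfl
  have hlip : ∀ n, LipschitzWith Λ (f n : Icc a b → ℝ) := by
    intro n
    apply LipschitzWith.of_dist_le_mul
    intro x x'
    rw [Real.dist_eq, hf, hf, hy n x x.2, hy n x' x'.2]
    have h1 : (c n - ∫ s in a..(x:ℝ), β s * V n s) - (c n - ∫ s in a..(x':ℝ), β s * V n s)
        = ∫ s in (x:ℝ)..(x':ℝ), β s * V n s := by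
      have := intervalIntegral.integral_interval_sub_left (μ := volume) (f := fun s => β s * V n s) (a := a) (b := x') (c := x)
        ((hβc.mul (hVc n)).intervalIntegrable _ _) ((hβc.mul (hVc n)).intervalIntegrable _ _)
      linarith
    have h2 := intervalIntegral.norm_integral_le_of_norm_le_const (a := (x:ℝ)) (b := x') (C := (Λ:ℝ))
      (f := fun s => β s * V n s) (by
        intro s hs
        have : s ∈ uIcc (x:ℝ) x' := uIoc_subset_uIcc hs
        exact hβV n s (uIcc_subset_Icc x.2 x'.2 this))
    rw [← h1] at h2
    rw [Subtype.dist_eq, dist_comm, Real.dist_eq]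
    exact h2
  have hcomp : IsCompact (closure (range f)) := by
    apply BoundedContinuousFunction.arzela_ascoli (Icc (-B) B) isCompact_Icc
    · rintro _ x ⟨n, rfl⟩
      rw [hf]
      exact abs_le.1 (hB n x x.2)
    · apply UniformEquicontinuous.equicontinuous
      apply LipschitzWith.uniformEquicontinuous _ Λ
      rintro ⟨_, n, rfl⟩
      exact hlip n
  obtain ⟨F, -, φ, hφ, hlim⟩ := hcomp.tendsto_subseq (x := f) (fun n => subset_closure (mem_range_self n))
  rw [BoundedContinuousFunction.tendsto_iff_tendstoUniformly] at hlim
  have hδφ : Tendsto (fun n => δ (φ n)) atTop (𝓝 0) := hδ0.comp hφ.tendsto_atTop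
  set W : ℝ → ℝ := fun t => F (projIcc a b hab.le t) with hW
  have hWc : Continuous W := F.continuous.comp continuous_projIcc
  have hpt : ∀ t ∈ Icc a b, Tendsto (fun n => y (φ n) t) atTop (𝓝 (W t)) := by
    intro t ht
    have := hlim.tendsto_at ⟨t, ht⟩
    rw [hW]
    simp only [projIcc_of_mem hab.le ht]
    exact this
  have hpt2 : ∀ t ∈ Icc a b, Tendsto (fun n => y (φ n) (max a (t - δ (φ n)))) atTop (𝓝 (W t)) := by
    intro t ht
    have hx : Tendsto (fun n => (⟨max a (t - δ (φ n)), hmem (φ n) t ht⟩ : Icc a b)) atTop (𝓝 ⟨t, ht⟩) := by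
      rw [tendsto_subtype_rng]
      have h1 : Tendsto (fun n => max a (t - δ (φ n))) atTop (𝓝 (max a (t - 0))) :=
        tendsto_const_nhds.max (tendsto_const_nhds.sub hδφ)
      rw [sub_zero, max_eq_right ht.1] at h1
      exact h1
    have := hlim.tendsto_comp F.continuous.continuousAt hx
    rw [hW]
    simp only [projIcc_of_mem hab.le ht]
    exact this
  set v : ℝ → ℝ := fun s => -∫ τ in a..s, α τ * G (W τ) with hv
  have hic : Continuous (fun τ => α τ * G (W τ)) := hαc.mul (hGc.comp hWc)
  have hvc : Continuous v := 
    (intervalIntegral.continuous_primitive (fun _ _ => hic.intervalIntegrable _ _) a).neg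
  have hVlim : ∀ s ∈ Icc a b, Tendsto (fun n => V (φ n) s) atTop (𝓝 (- v s)) := by
    intro s hs
    simp only [hv, neg_neg]
    apply intervalIntegral.tendsto_integral_filter_of_dominated_convergence (fun _ => A * (K * B))
    · exact Eventually.of_forall fun n => (hinc _).aestronglyMeasurable
    · refine Eventually.of_forall fun n => Eventually.of_forall fun τ hτ => ?_
      rw [uIoc_of_le hs.1] at hτ
      exact hib _ τ ⟨hτ.1.le, hτ.2.trans hs.2⟩
    · exact intervalIntegrable_const
    · refine Eventually.of_forall fun τ hτ => ?_
      rw [uIoc_of_le hs.1] at hτ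
      exact tendsto_const_nhds.mul ((hGc.tendsto _).comp (hpt2 τ ⟨hτ.1.le, hτ.2.trans hs.2⟩))
  set w : ℝ → ℝ := fun t => W a + ∫ s in a..t, β s * v s with hw
  have hclim : Tendsto (fun n => c (φ n)) atTop (𝓝 (W a)) := by
    have h1 := hpt a ⟨le_rfl, hab.le⟩
    refine h1.congr fun n => ?_
    rw [hy _ a ⟨le_rfl, hab.le⟩]
    simp
  have hWw : ∀ t ∈ Icc a b, W t = w t := by
    intro t ht
    have h1 : Tendsto (fun n => ∫ s in a..t, β s * V (φ n) s) atTop (𝓝 (∫ s in a..t, β s * (- v s))) := by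
      apply intervalIntegral.tendsto_integral_filter_of_dominated_convergence (fun _ => β1 * (A * (K * B) * (b - a)))
      · exact Eventually.of_forall fun n => (hβc.mul (hVc _)).aestronglyMeasurable
      · refine Eventually.of_forall fun n => Eventually.of_forall fun τ hτ => ?_
        rw [uIoc_of_le ht.1] at hτ
        exact hβV _ τ ⟨hτ.1.le, hτ.2.trans ht.2⟩
      · exact intervalIntegrable_const
      · refine Eventually.of_forall fun τ hτ => ?_
        rw [uIoc_of_le ht.1] at hτ
        exact tendsto_const_nhds.mul (hVlim τ ⟨hτ.1.le, hτ.2.trans ht.2⟩)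
    have h2 := hclim.sub h1
    have h3 : Tendsto (fun n => y (φ n) t) atTop (𝓝 (W a - ∫ s in a..t, β s * (- v s))) := by
      refine h2.congr fun n => ?_
      rw [hy _ t ht]
    have h4 := tendsto_nhds_unique (hpt t ht) h3
    rw [h4, hw]
    simp only [mul_neg, intervalIntegral.integral_neg, sub_neg_eq_add]
  have hbv : Continuous (fun s => β s * v s) := hβc.mul hvc
  refine ⟨φ, hφ, w, v, ?_, ?_, ?_, ?_⟩
  · intro t ht
    constructor
    · exact (intervalIntegral.integral_hasDerivAt_right (hbv.intervalIntegrable _ _)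
        hbv.aestronglyMeasurable.stronglyMeasurableAtFilter hbv.continuousAt).const_add _
    · rw [← hWw t ht]
      exact (intervalIntegral.integral_hasDerivAt_right (hic.intervalIntegrable _ _)
        hic.aestronglyMeasurable.stronglyMeasurableAtFilter hic.continuousAt).fun_neg
  · simp [hv]
  · rw [← hWw a ⟨le_rfl, hab.le⟩]; exact hclim
  · have := (hVlim b ⟨hab.le, le_rfl⟩).neg
    rw [neg_neg] at this
    exact this

open Topology in
lemma shoot {a b A K β1 c0 C0 : ℝ} {α β G : ℝ → ℝ} (hab : a < b)
    (hαc : Continuous α) (hβc : Continuous β) (hGc : Continuous G)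
    (hβ0 : ∀ t, 0 < β t) (hβ1 : ∀ t, β t ≤ β1) (hα : ∀ t, |α t| ≤ A)
    (hK : 0 ≤ K) (hG : ∀ s, |G s| ≤ K * |s|) (hc0 : 0 < c0) (hcC : c0 ≤ C0)
    (h0 : ∀ w v : ℝ → ℝ, Sol a b α β G w v → w a = c0 → v a = 0 → 0 < v b)
    (h1 : ∀ w v : ℝ → ℝ, Sol a b α β G w v → w a = C0 → v a = 0 → v b < 0) :
    ∃ w v : ℝ → ℝ, Sol a b α β G w v ∧ c0 ≤ w a ∧ v a = 0 ∧ v b = 0 := by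
  have hA : 0 ≤ A := (abs_nonneg _).trans (hα 0)
  have hβ1p : 0 < β1 := (hβ0 0).trans_le (hβ1 0)
  have hpos : 0 ≤ β1 * (A * K) := by positivity
  set l := β1 * (A * K) + 1 with hl
  have hlp : 0 < l := by linarith
  have hl2 : β1 * (A * K) ≤ l * l := by nlinarith
  set d : ℕ → ℝ := fun n => 1 / ((n : ℝ) + 1) with hd
  have hdp : ∀ n, 0 < d n := fun n => by simp only [hd]; positivity
  have hd0 : Tendsto d atTop (𝓝 0) := tendsto_one_div_add_atTop_nhds_zero_nat
  choose y hyc hy hyb using fun n => delay_exists (a := a) (b := b) (hdp n) hαc hβc hGc hβ0 hβ1 hα hK hG hlp hl2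
  set B := C0 * Real.exp (l * (b - a)) with hB
  have hC0 : 0 < C0 := hc0.trans_le hcC
  have hB0 : 0 ≤ B := by positivity
  have hyB : ∀ n, ∀ c ∈ Icc c0 C0, ∀ t ∈ Icc a b, |y n c t| ≤ B := by
    intro n c hc t ht
    refine (hyb n c t ht.1).trans ?_
    rw [abs_of_pos (hc0.trans_le hc.1)]
    refine mul_le_mul hc.2 ?_ (Real.exp_pos _).le hC0.le
    exact Real.exp_le_exp.2 (mul_le_mul_of_nonneg_left (by linarith [ht.2]) hlp.le)
  set E : ℕ → ℝ → ℝ := fun n c => -∫ τ in a..b, α τ * G (y n c (max a (τ - d n))) with hE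
  have hEc : ∀ n, Continuous (E n) := by
    intro n
    refine Continuous.neg ?_
    apply intervalIntegral.continuous_parametric_intervalIntegral_of_continuous _ continuous_const
    simp only [Function.uncurry_def]
    have h2 : Continuous (fun q : ℝ × ℝ => y n q.1 (max a (q.2 - d n))) :=
      (hyc n).comp (f := fun q : ℝ × ℝ => (q.1, max a (q.2 - d n))) (by fun_prop)
    exact (hαc.comp continuous_snd).mul (hGc.comp h2)
  have main : ∀ (ψ : ℕ → ℕ) (c : ℕ → ℝ), StrictMono ψ → (∀ n, c n ∈ Icc c0 C0) →
      ∃ φ : ℕ → ℕ, StrictMono φ ∧ ∃ w v : ℝ → ℝ, Sol a b α β G w v ∧ v a = 0 ∧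
      Tendsto (fun n => c (φ n)) atTop (𝓝 (w a)) ∧
      Tendsto (fun n => E (ψ (φ n)) (c (φ n))) atTop (𝓝 (v b)) := by
    intro ψ c hψ hc
    exact compactness (δ := fun n => d (ψ n)) (c := c) (y := fun n => y (ψ n) (c n)) hab hαc hβc hGc hβ0 hβ1 hα hK hG
      (fun n => hdp _) (hd0.comp hψ.tendsto_atTop)
      (fun n => (hyc _).comp (f := fun t => (c n, t)) (by fun_prop)) (fun n => hy _ _) hB0 (fun n => hyB _ _ (hc n))
  have ev0 : ∀ᶠ n in atTop, 0 < E n c0 := by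
    by_contra hcon
    rw [Filter.not_eventually] at hcon
    obtain ⟨ψ, hψ, hψ'⟩ := Filter.extraction_of_frequently_atTop hcon
    obtain ⟨φ, hφ, w, v, hs, hva, hwa, hvb⟩ := main ψ (fun _ => c0) hψ (fun _ => ⟨le_rfl, hcC⟩)
    have hwa' : w a = c0 := tendsto_nhds_unique hwa tendsto_const_nhds
    have := h0 w v hs hwa' hva
    have h5 : v b ≤ 0 := le_of_tendsto' hvb (fun n => not_lt.1 (hψ' _))
    linarith
  have ev1 : ∀ᶠ n in atTop, E n C0 < 0 := by
    by_contra hcon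
    rw [Filter.not_eventually] at hcon
    obtain ⟨ψ, hψ, hψ'⟩ := Filter.extraction_of_frequently_atTop hcon
    obtain ⟨φ, hφ, w, v, hs, hva, hwa, hvb⟩ := main ψ (fun _ => C0) hψ (fun _ => ⟨hcC, le_rfl⟩)
    have hwa' : w a = C0 := tendsto_nhds_unique hwa tendsto_const_nhds
    have := h1 w v hs hwa' hva
    have h5 : 0 ≤ v b := ge_of_tendsto' hvb (fun n => not_lt.1 (hψ' _))
    linarith
  obtain ⟨n0, hn0⟩ := eventually_atTop.1 (ev0.and ev1)
  have hz : ∀ n, ∃ c ∈ Icc c0 C0, E (n + n0) c = 0 := by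
    intro n
    obtain ⟨h3, h4⟩ := hn0 (n + n0) (Nat.le_add_left _ _)
    have := intermediate_value_Icc' hcC (hEc (n + n0)).continuousOn
    obtain ⟨c, hc, hc'⟩ := this ⟨h4.le, h3.le⟩
    exact ⟨c, hc, hc'⟩
  choose c hc hc' using hz
  obtain ⟨φ, hφ, w, v, hs, hva, hwa, hvb⟩ := main (fun n => n + n0) c (fun x y h => by simpa using h) hc
  refine ⟨w, v, hs, ge_of_tendsto' hwa (fun n => (hc _).1), hva, ?_⟩
  simp only [hc'] at hvb
  exact tendsto_nhds_unique hvb tendsto_const_nhds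

lemma subint {a b σ τ r : ℝ} {Q : ℝ → ℝ} (hQ : ContinuousOn Q (Icc a b)) (hσ : a ≤ σ) (hτ : τ ≤ b)
    (hlt : σ < τ) (hr : r ∈ Icc σ τ) (hQr : 0 < Q r) :
    ∃ p q : ℝ, σ < p ∧ p < q ∧ q < τ ∧ ∀ t ∈ Icc p q, 0 < Q t := by
  have h1 : ∀ᶠ t in nhdsWithin r (Icc a b), 0 < Q t :=
    (hQ r ⟨hσ.trans hr.1, hr.2.trans hτ⟩).eventually (lt_mem_nhds hQr)
  rw [eventually_nhdsWithin_iff, Metric.eventually_nhds_iff] at h1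
  obtain ⟨e, he, h2⟩ := h1
  have hpq : max σ (r - e) < min τ (r + e) := by
    have := hr.1; have := hr.2
    apply max_lt <;> apply lt_min <;> linarith
  obtain ⟨p, hp1, hp2⟩ := exists_between hpq
  obtain ⟨q, hq1, hq2⟩ := exists_between hp2
  have a1 := max_lt_iff.1 hp1
  have a2 := lt_min_iff.1 hq2
  refine ⟨p, q, a1.1, hq1, a2.1, fun t ht => h2 ?_ ⟨by linarith [ht.1], by linarith [ht.2]⟩⟩
  rw [Real.dist_eq, abs_lt]
  constructor <;> linarith [ht.1, ht.2]

lemma nondeg {a b : ℝ} {Q : ℝ → ℝ} {m : ℕ} {σ τ : Fin m → ℝ} (hab : a < b)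
    (hQ : ContinuousOn Q (Icc a b)) (h1 : ∀ i, a ≤ σ i ∧ σ i ≤ τ i ∧ τ i ≤ b)
    (h2 : Pairwise fun i j => Disjoint (Icc (σ i) (τ i)) (Icc (σ j) (τ j)))
    (h3 : ∀ i, ∃ r ∈ Icc (σ i) (τ i), 0 < Q r)
    (h4 : ∀ r ∈ Icc a b \ ⋃ i, Icc (σ i) (τ i), Q r ≤ 0) (i : Fin m) : σ i < τ i := by
  refine lt_of_le_of_ne (h1 i).2.1 fun heq => ?_
  obtain ⟨r, hr, hQr⟩ := h3 i
  have hmem : r ∈ Icc a b := ⟨(h1 i).1.trans hr.1, hr.2.trans (h1 i).2.2⟩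
  have e1 : ∀ᶠ t in nhdsWithin r (Icc a b), 0 < Q t := (hQ r hmem).eventually (lt_mem_nhds hQr)
  have e2 : ∀ᶠ t in nhds r, ∀ j, j ≠ i → t ∉ Icc (σ j) (τ j) := by
    rw [eventually_all]
    intro j
    by_cases hj : j = i
    · simp [hj]
    · have : r ∉ Icc (σ j) (τ j) := fun h => (Set.disjoint_left.1 (h2 hj)) h hr
      filter_upwards [isClosed_Icc.isOpen_compl.mem_nhds this] with t ht _ using ht
  rw [eventually_nhdsWithin_iff] at e1
  obtain ⟨e, he, h5⟩ := Metric.eventually_nhds_iff.1 (e1.and e2)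
  -- a point close to r but different
  obtain ⟨t, ht, htr, hd⟩ : ∃ t ∈ Icc a b, t ≠ r ∧ dist t r < e := by
    rcases lt_or_ge r b with hrb | hrb
    · obtain ⟨t, h6, h7⟩ := exists_between (lt_min hrb (by linarith : r < r + e))
      have := lt_min_iff.1 h7
      refine ⟨t, ⟨hmem.1.trans h6.le, this.1.le⟩, h6.ne', ?_⟩
      rw [Real.dist_eq, abs_lt]; constructor <;> linarith
    · obtain ⟨t, h6, h7⟩ := exists_between (max_lt (hab.trans_le hrb) (by linarith : r - e < r))
      have := max_lt_iff.1 h6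
      refine ⟨t, ⟨this.1.le, h7.le.trans hmem.2⟩, h7.ne, ?_⟩
      rw [Real.dist_eq, abs_lt]; constructor <;> linarith
  obtain ⟨h6, h7⟩ := h5 hd
  have h8 := h6 ht
  have h9 := h4 t ⟨ht, by
    rw [mem_iUnion]
    rintro ⟨j, hj⟩
    by_cases hji : j = i
    · subst hji
      apply htr
      rw [← heq, Icc_self, mem_singleton_iff] at hr hj
      rw [hr, hj]
    · exact h7 j hji hj⟩
  linarith

lemma all_bounds {a b β0 β1 : ℝ} {α β : ℝ → ℝ} {m : ℕ} {σ τ : Fin m → ℝ} (hm : 0 < m) (hab : a < b)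
    (hα : Continuous α) (h1 : ∀ i, a ≤ σ i ∧ σ i ≤ τ i ∧ τ i ≤ b)
    (h2 : Pairwise fun i j => Disjoint (Icc (σ i) (τ i)) (Icc (σ j) (τ j)))
    (h0 : ∀ i, ∀ r ∈ Icc (σ i) (τ i), 0 ≤ α r)
    (h3 : ∀ i, ∃ r ∈ Icc (σ i) (τ i), 0 < α r)
    (h4 : ∀ r ∈ Icc a b \ ⋃ i, Icc (σ i) (τ i), α r ≤ 0)
    (hβ0 : 0 < β0) (hβ : ∀ t, β0 ≤ β t ∧ β t ≤ β1) :
    ∃ K > 0, ∀ C : ℝ, ∃ M > 0, ∀ G w v : ℝ → ℝ, (∀ s, 0 ≤ s → 0 ≤ G s) →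
      (∀ s, 0 ≤ s → K * s - C ≤ G s) → Sol a b α β G w v →
      (∀ t ∈ Icc a b, 0 ≤ w t) → ∀ r ∈ ⋃ i, Icc (σ i) (τ i), w r ≤ M := by
  have key : ∀ i, ∃ K > 0, ∀ C : ℝ, ∃ M > 0, ∀ G w v : ℝ → ℝ, (∀ s, 0 ≤ s → 0 ≤ G s) →
      (∀ s, 0 ≤ s → K * s - C ≤ G s) → Sol (σ i) (τ i) α β G w v →
      (∀ t ∈ Icc (σ i) (τ i), 0 ≤ w t) → ∀ r ∈ Icc (σ i) (τ i), w r ≤ M := by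
    intro i
    have hlt := nondeg hab hα.continuousOn h1 h2 h3 h4 i
    obtain ⟨r, hr, hr0⟩ := h3 i
    obtain ⟨p, q, hp, hpq, hq, hpos⟩ := subint hα.continuousOn (h1 i).1 (h1 i).2.2 hlt hr hr0
    obtain ⟨x, hx, hmin⟩ := isCompact_Icc.exists_isMinOn (nonempty_Icc.2 hpq.le) (hα.continuousOn (s := Icc p q))
    exact lemA hp hpq hq (hpos x hx) (h0 i) (fun t ht => hmin ht) hβ0 hβ
  choose K hK hKM using key
  have hi0 : Nonempty (Fin m) := ⟨⟨0, hm⟩⟩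
  refine ⟨∑ i, K i, Finset.sum_pos (fun i _ => hK i) Finset.univ_nonempty, fun C => ?_⟩
  choose M hM hMb using fun i => hKM i C
  refine ⟨∑ i, M i, Finset.sum_pos (fun i _ => hM i) Finset.univ_nonempty, ?_⟩
  intro G w v hG hGK hs hw r hr
  obtain ⟨i, hi⟩ := mem_iUnion.1 hr
  have e1 : K i ≤ ∑ i, K i := Finset.single_le_sum (fun j _ => (hK j).le) (Finset.mem_univ i)
  have e2 : M i ≤ ∑ i, M i := Finset.single_le_sum (fun j _ => (hM j).le) (Finset.mem_univ i)
  refine (hMb i G w v hG (fun s hs0 => ?_) (hs.mono (h1 i).1 (h1 i).2.2)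
    (fun t ht => hw t ⟨(h1 i).1.trans ht.1, ht.2.trans (h1 i).2.2⟩) r hi).trans e2
  have := mul_le_mul_of_nonneg_right e1 hs0
  linarith [hGK s hs0]

/-- Abstract existence theorem. -/
lemma abstract_exists {a b A β0 β1 : ℝ} {α β g : ℝ → ℝ} {m : ℕ} {σ τ : Fin m → ℝ} (hm : 0 < m) (hab : a < b)
    (hα : Continuous α) (h1 : ∀ i, a ≤ σ i ∧ σ i ≤ τ i ∧ τ i ≤ b)
    (h2 : Pairwise fun i j => Disjoint (Icc (σ i) (τ i)) (Icc (σ j) (τ j)))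
    (h0 : ∀ i, ∀ r ∈ Icc (σ i) (τ i), 0 ≤ α r)
    (h3 : ∀ i, ∃ r ∈ Icc (σ i) (τ i), 0 < α r)
    (h4 : ∀ r ∈ Icc a b \ ⋃ i, Icc (σ i) (τ i), α r ≤ 0)
    (hβ0 : 0 < β0) (hβ : ∀ t, β0 ≤ β t ∧ β t ≤ β1) (hβc : Continuous β) (hA : ∀ t, |α t| ≤ A)
    (hI : ∫ t in a..b, α t < 0) (hgc : ContinuousOn g (Ici 0)) (hgn : ∀ s, 0 ≤ s → 0 ≤ g s)
    (hg00 : g 0 = 0)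
    (hg : ∀ s, 0 < s → 0 < g s)
    (hreg : ∀ ε : ℝ, 0 < ε → ∃ δ > (0:ℝ), ∃ η > (0:ℝ), ∀ s ω : ℝ,
      0 < s → s < δ → |ω - 1| < η → |g (ω * s) / g s - 1| < ε)
    (hg0 : Tendsto (fun s => g s / s) (nhdsWithin 0 (Ioi 0)) (nhds 0))
    (hginf : Tendsto (fun s => g s / s) atTop atTop) :
    ∃ w v : ℝ → ℝ, Sol a b α β g w v ∧ v a = 0 ∧ v b = 0 ∧ ∀ t ∈ Icc a b, 0 < w t := by
  obtain ⟨K, hK, hKM⟩ := all_bounds hm hab hα h1 h2 h0 h3 h4 hβ0 hβ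
  obtain ⟨s0, hs0p, hs0⟩ : ∃ s0 > 0, ∀ s, s0 ≤ s → K * s ≤ g s := by
    obtain ⟨s1, hs1⟩ := eventually_atTop.1 (hginf.eventually_ge_atTop K)
    refine ⟨max s1 1, by positivity, fun s hs => ?_⟩
    have hsp : 0 < s := by linarith [le_max_right s1 1]
    have := hs1 s ((le_max_left _ _).trans hs)
    rwa [le_div_iff₀ hsp] at this
  have hlow : ∀ s, 0 ≤ s → K * s - K * s0 ≤ g s := by
    intro s hs
    rcases le_total s0 s with h | h
    · have := hs0 s h
      have : 0 ≤ K * s0 := by positivity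
      linarith
    · have := mul_le_mul_of_nonneg_left h hK.le
      linarith [hgn s hs]
  obtain ⟨M, hM, hMb⟩ := hKM (K * s0)
  -- linear bound of `g` on `[0,M]`
  obtain ⟨K1, hK1p, hK1⟩ : ∃ K1 ≥ 0, ∀ s, 0 ≤ s → s ≤ M → g s ≤ K1 * s := by
    obtain ⟨d, hd, hdl⟩ : ∃ d > 0, ∀ s, 0 < s → s < d → g s ≤ 1 * s := by
      have h1 := hg0.eventually (gt_mem_nhds zero_lt_one)
      rw [eventually_nhdsWithin_iff, Metric.eventually_nhds_iff] at h1
      obtain ⟨d, hd, h2⟩ := h1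
      refine ⟨d, hd, fun s hs hsd => ?_⟩
      have := h2 (y := s) (by rw [Real.dist_eq, sub_zero, abs_of_pos hs]; exact hsd) hs
      rw [div_lt_iff₀ hs] at this
      exact this.le
    obtain ⟨B, hB⟩ := (isCompact_Icc (a := (0:ℝ)) (b := M)).exists_bound_of_continuousOn
      (hgc.mono (fun x hx => hx.1))
    have hB0 : 0 ≤ B := (norm_nonneg _).trans (hB 0 ⟨le_rfl, hM.le⟩)
    refine ⟨1 + B / d, by positivity, fun s hs hsM => ?_⟩
    have hBd : 0 ≤ B / d := by positivity
    rcases hs.eq_or_lt with rfl | hsp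
    · simp [hg00]
    rcases lt_or_ge s d with h | h
    · have := hdl s hsp h
      have := mul_nonneg hBd hs
      linarith
    · have h5 := (le_abs_self _).trans (hB s ⟨hs, hsM⟩)
      have h6 : B ≤ B / d * s := by
        rw [div_mul_eq_mul_div, le_div_iff₀ hd]
        exact mul_le_mul_of_nonneg_left h hB0
      linarith
  set K2 := K + K1 with hK2
  have hK2p : 0 < K2 := by linarith
  set G : ℝ → ℝ := fun s => min (g (max s 0)) (K2 * max s 0) with hGdef
  have hGc : Continuous G := by
    have : Continuous (fun s : ℝ => g (max s 0)) :=
      hgc.comp_continuous (by fun_prop) (fun s => Set.mem_Ici.2 (le_max_right s 0))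
    exact this.min (by fun_prop)
  have hGn : ∀ s, 0 ≤ G s := fun s =>
    le_min (hgn _ (le_max_right _ _)) (mul_nonneg hK2p.le (le_max_right _ _))
  have hG0 : ∀ s ≤ 0, G s = 0 := by
    intro s hs
    simp [hGdef, max_eq_right hs, hg00]
  have hGlow : ∀ s, 0 ≤ s → K * s - K * s0 ≤ G s := by
    intro s hs
    simp only [hGdef, max_eq_left hs]
    refine le_min (hlow s hs) ?_
    have e1 : 0 ≤ K * s0 := by positivity
    have e2 : 0 ≤ K1 * s := by positivity
    rw [hK2]; linarith
  have hGb : ∀ s, |G s| ≤ K2 * |s| := by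
    intro s
    rw [abs_of_nonneg (hGn s)]
    refine (min_le_right _ _).trans (mul_le_mul_of_nonneg_left ?_ hK2p.le)
    exact max_le (le_abs_self s) (abs_nonneg s)
  have hGg : ∀ s, 0 ≤ s → s ≤ M → G s = g s := by
    intro s hs hsM
    simp only [hGdef, max_eq_left hs]
    apply min_eq_left
    have e2 : 0 ≤ K * s := by positivity
    have := hK1 s hs hsM
    rw [hK2]; linarith
  have hβp : ∀ t, 0 < β t := fun t => hβ0.trans_le (hβ t).1
  set S := ⋃ i, Icc (σ i) (τ i) with hS
  have hScl : IsClosed S := isClosed_iUnion_of_finite fun i => isClosed_Icc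
  have hSab : S ⊆ Icc a b := iUnion_subset fun i => Icc_subset_Icc (h1 i).1 (h1 i).2.2
  have hSne : S.Nonempty := ⟨σ ⟨0, hm⟩, mem_iUnion.2 ⟨⟨0, hm⟩, le_rfl, (h1 _).2.1⟩⟩
  obtain ⟨c0, hc0, hc0M, hsmall⟩ := small_start hab hβp (fun t => (hβ t).2) hA hα hI hM hg hreg hg0
  obtain ⟨w, v, hs, hwa, hva, hvb⟩ := shoot (C0 := M + 1) hab hα hβc hGc hβp (fun t => (hβ t).2) hA hK2p.le hGb hc0
    (by linarith) (fun w v hs hwa hva => hsmall G w v (fun s h5 h6 => hGg s h5.le h6) hs hwa hva)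
    (fun w v hs hwa hva => large_start hs hab hβ0 (fun t => (hβ t).1) (fun s _ => hGn s) hG0 hScl hSab hSne h4 hva
      (fun hw => hMb G w v (fun s _ => hGn s) hGlow hs hw) hM (by linarith))
  have hw := nonneg_of_end hs hβ0 (fun t => (hβ t).1) hG0 (by linarith) hvb.ge
  have hwM := bound_all hs hab hβ0 (fun t => (hβ t).1) (fun s _ => hGn s) hw hScl hSab hSne h4 hva hvb
    (hMb G w v (fun s _ => hGn s) hGlow hs hw)
  refine ⟨w, v, fun t ht => ?_, hva, hvb, pos_of_nonneg hs hβp (fun t => (hβ t).2) hA hGb hK2p.le (by linarith) hvb hw⟩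
  rw [← hGg (w t) (hw t ht) (hwM t ht)]
  exact hs t ht

end RN

/-- Theorem: for `N ≥ 2`, `0 < R₁ < R₂`, a continuous radial weight `Q`
satisfying (q1) and (q2), and `g` satisfying (g1), regularly oscillating at
zero, with `g(s)/s → 0` as `s → 0⁺` and `g(s)/s → +∞` as `s → +∞`, the Neumann
problem `−Δu = Q(‖x‖) g(u)` on the annulus has a positive radially symmetric
solution. -/
theorem statement_11
    (N : ℕ) (hN : 2 ≤ N) (R₁ R₂ : ℝ) (hR1 : 0 < R₁) (hR12 : R₁ < R₂)
    (Q : ℝ → ℝ) (hQc : ContinuousOn Q (Icc R₁ R₂))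
    (hq1 : CondQ1 R₁ R₂ Q)
    (hq2 : (∫ r in R₁..R₂, r ^ (N - 1) * Q r) < 0)
    (g : ℝ → ℝ) (hg1 : CondG1 g) (hreg : RegOscAtZero g)
    (hg0 : Tendsto (fun s => g s / s) (nhdsWithin 0 (Ioi 0)) (nhds 0))
    (hginf : Tendsto (fun s => g s / s) atTop atTop) :
    RadialNeumannPosSol N R₁ R₂ Q g := by
  obtain ⟨m, σ, τ, hm, h1, h2, h3, h4, h5⟩ := hq1
  obtain ⟨hgc, hgn, hg00, hgp⟩ := hg1
  set cl : ℝ → ℝ := fun r => max R₁ (min r R₂) with hcl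
  have hclc : Continuous cl := by fun_prop
  have hclm : ∀ r, cl r ∈ Icc R₁ R₂ := fun r => ⟨le_max_left _ _, max_le hR12.le (min_le_right _ _)⟩
  have hcle : ∀ r ∈ Icc R₁ R₂, cl r = r := fun r hr => by
    simp only [hcl, min_eq_left hr.2, max_eq_right hr.1]
  have hclp : ∀ r, 0 < cl r := fun r => hR1.trans_le (hclm r).1
  set α : ℝ → ℝ := fun r => cl r ^ (N - 1) * Q (cl r) with hα
  set β : ℝ → ℝ := fun r => (cl r ^ (N - 1))⁻¹ with hβ
  have hαc : Continuous α := (hclc.pow _).mul (hQc.comp_continuous hclc hclm)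
  have hβc : Continuous β := (hclc.pow _).inv₀ (fun r => (pow_pos (hclp r) _).ne')
  have hαe : ∀ r ∈ Icc R₁ R₂, α r = r ^ (N - 1) * Q r := fun r hr => by
    simp only [hα, hcle r hr]
  have hsub : ∀ i, ∀ r ∈ Icc (σ i) (τ i), r ∈ Icc R₁ R₂ := fun i r hr =>
    ⟨(h1 i).1.trans hr.1, hr.2.trans (h1 i).2.2⟩
  have hpp : ∀ r ∈ Icc R₁ R₂, 0 < r ^ (N - 1) := fun r hr => pow_pos (hR1.trans_le hr.1) _
  obtain ⟨A, hA⟩ := (isCompact_Icc (a := R₁) (b := R₂)).exists_bound_of_continuousOn hαc.continuousOn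
  have hI : ∫ t in R₁..R₂, α t < 0 := by
    have : ∫ t in R₁..R₂, α t = ∫ r in R₁..R₂, r ^ (N - 1) * Q r := by
      apply intervalIntegral.integral_congr
      intro r hr
      rw [uIcc_of_le hR12.le] at hr
      exact hαe r hr
    rw [this]; exact hq2
  obtain ⟨w, v, hs, hva, hvb, hw⟩ := RN.abstract_exists (a := R₁) (b := R₂) (A := A)
    (β0 := (R₂ ^ (N - 1))⁻¹) (β1 := (R₁ ^ (N - 1))⁻¹) (α := α) (β := β) (g := g) (σ := σ) (τ := τ)
    hm hR12 hαc h1 h2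
    (fun i r hr => by
      rw [hαe r (hsub i r hr)]
      exact mul_nonneg (hpp r (hsub i r hr)).le (h3 i r hr))
    (fun i => by
      obtain ⟨r, hr, hQ⟩ := h4 i
      refine ⟨r, hr, ?_⟩
      rw [hαe r (hsub i r hr)]
      exact mul_pos (hpp r (hsub i r hr)) hQ)
    (fun r hr => by
      rw [hαe r hr.1]
      exact mul_nonpos_of_nonneg_of_nonpos (hpp r hr.1).le (h5 r hr))
    (by have := hR1.trans hR12; positivity)
    (fun t => ⟨inv_anti₀ (pow_pos (hclp t) _) (pow_le_pow_left₀ (hclp t).le (hclm t).2 _),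
      inv_anti₀ (pow_pos hR1 _) (pow_le_pow_left₀ hR1.le (hclm t).1 _)⟩)
    hβc
    (fun t => by
      have h6 : α t = α (cl t) := by simp only [hα, hcle _ (hclm t)]
      rw [h6]; exact hA _ (hclm t))
    hI hgc hgn hg00 hgp hreg hg0 hginf
  have hwc : ContinuousOn w (Icc R₁ R₂) := hs.contW
  have hvc : ContinuousOn v (Icc R₁ R₂) := hs.contV
  have hpc : ContinuousOn (fun r : ℝ => (r ^ (N - 1))⁻¹) (Icc R₁ R₂) :=
    (continuous_pow _).continuousOn.inv₀ (fun r hr => (hpp r hr).ne')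
  have hgw : ContinuousOn (fun r => g (w r)) (Icc R₁ R₂) :=
    hgc.comp hwc (fun r hr => (hw r hr).le)
  refine ⟨w, fun r => (r ^ (N - 1))⁻¹ * v r,
    fun r => -((((N : ℝ) - 1) / r) * ((r ^ (N - 1))⁻¹ * v r)) - Q r * g (w r), ?_, ?_, ?_, hw, ?_, ?_, ?_⟩
  · intro r hr
    have := (hs r hr).1
    simp only [hβ, hcle r hr] at this
    exact this.hasDerivWithinAt
  · intro r hr
    have hr0 : r ≠ 0 := (hR1.trans_le hr.1).ne'
    have e1 := (hs r hr).2
    rw [hαe r hr] at e1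
    have e2 : HasDerivAt (fun r : ℝ => (r ^ (N - 1))⁻¹) (-(((N - 1 : ℕ) : ℝ) * r ^ (N - 1 - 1)) / (r ^ (N - 1)) ^ 2) r :=
      (hasDerivAt_pow (N - 1) r).fun_inv (hpp r hr).ne'
    refine ((e2.fun_mul e1).congr_deriv ?_).hasDerivWithinAt
    obtain ⟨k, rfl⟩ : ∃ k, N = k + 2 := ⟨N - 2, by omega⟩
    have e3 : k + 2 - 1 = k + 1 := by omega
    have e4 : k + 1 - 1 = k := by omega
    rw [e3, e4]
    push_cast
    field_simp
    ring
  · have hr0 : ContinuousOn (fun r : ℝ => ((N : ℝ) - 1) / r) (Icc R₁ R₂) :=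
      continuousOn_const.div continuousOn_id (fun r hr => (hR1.trans_le hr.1).ne')
    exact ((hr0.mul (hpc.mul hvc)).neg).sub (hQc.mul hgw)
  · intro r hr
    ring
  · simp [hva]
  · simp [hvb]
end
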